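/- arXiv:math/0611047 — 3 statements merged into one kernel-verified Lean document; each statement's English description precedes it below -/
import Mathlib

section
/- A system of parameters x_1,...,x_d in a Noetherian local ring (R,m) is a standard system of parameters if and only if it is an unconditioned strong d-sequence, i.e., every permutation of x_1^{m_1},...,x_d^{m_d} is a d-sequence for all exponents m_i ≥ 1. -/
universe u

open IsLocalRing

/-- `y_1,…,y_n` is a d-sequence: `(y_1,…,y_i) : y_{i+1}y_k = (y_1,…,y_i) : y_k`
for all `0 ≤ i ≤ n-1` and `k > i` (0-indexed: `k ≥ i`). -/
def IsDSequence {R : Type u} [CommRing R] {n : ℕ} (y : Fin n → R) : Prop :=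
  ∀ (i : ℕ) (hi : i < n) (k : Fin n), i ≤ (k : ℕ) →
    (Ideal.span (y '' {j : Fin n | (j : ℕ) < i})).colon (Ideal.span {y ⟨i, hi⟩ * y k}) =
      (Ideal.span (y '' {j : Fin n | (j : ℕ) < i})).colon (Ideal.span {y k})

/-- `y_1,…,y_n` is an unconditioned strong d-sequence: every permutation of
`y_1^{m_1},…,y_n^{m_n}` is a d-sequence for all exponents `m_i ≥ 1`. -/
def IsUSDSequence {R : Type u} [CommRing R] {n : ℕ} (y : Fin n → R) : Prop :=
  ∀ (m : Fin n → ℕ), (∀ j, 1 ≤ m j) → ∀ σ : Equiv.Perm (Fin n),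
    IsDSequence (fun j => y (σ j) ^ m (σ j))

/-- `x_1,…,x_d` is a standard system of parameters:
`(x_1,…,x_d)·H_𝔪^j(R/(x_1,…,x_{i-1})) = 0` for all `i ≥ 1`, `i + j ≤ d`. -/
def IsStandardSOP {R : Type u} [CommRing R] [IsLocalRing R] {d : ℕ} (x : Fin d → R) : Prop :=
  ∀ i j : ℕ, 1 ≤ i → i + j ≤ d → ∀ r ∈ Ideal.span (Set.range x),
    ∀ m : ((localCohomology (maximalIdeal R) j).obj
      (ModuleCat.of R (R ⧸ Ideal.span (x '' {k : Fin d | (k : ℕ) < i - 1})))),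
      r • m = 0

/-! Everything rests on the exact sequence `0 → M ⧸ (N : x) → M ⧸ N → M ⧸ (N + x M) → 0`, in which
`N : x` lies in the `𝔪`-saturation of `N`, so that the first term has the higher local cohomology
of `M ⧸ N`. If `x₁, …, x_d` is standard, its long exact sequence shows that the conditions survive
swapping adjacent elements and replacing an element by a power; hence they hold for all partial
submodules, and at `H⁰` they yield the colon conditions of a d-sequence. Conversely, a class in
`H^(j+1)(M ⧸ N)` is killed by some `x_i ^ n`, hence is the image under a connecting map of a class
in `H^j(M ⧸ (N + x_i ^ n M))`, and induction on `j` reduces the vanishing to `H⁰`. -/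

section LocalCohomologyModule

open CategoryTheory CategoryTheory.Abelian

variable {R : Type u} [CommRing R]

/-- The `R`-module `R ⧸ J ^ n`, as an object of the category of modules. -/
noncomputable abbrev quotPow (J : Ideal R) (n : ℕ) : ModuleCat.{u} R :=
  ModuleCat.of R (R ⧸ J ^ n)

/-- The canonical projection `R ⧸ J ^ n' → R ⧸ J ^ n` for `n ≤ n'`. -/
noncomputable def quotPowMap (J : Ideal R) {n n' : ℕ} (h : n ≤ n') : quotPow J n' ⟶ quotPow J n :=
  ModuleCat.ofHom (Submodule.mapQ (J ^ n') (J ^ n) LinearMap.id (Ideal.pow_le_pow_right h))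

lemma quotPow_hom_ext {J : Ideal R} {n : ℕ} {M : ModuleCat.{u} R} {f g : quotPow J n ⟶ M}
    (h : f (Submodule.Quotient.mk (1 : R)) = g (Submodule.Quotient.mk (1 : R))) : f = g :=
  ModuleCat.hom_ext <| Submodule.linearMap_qext _ <| LinearMap.ext_ring h

lemma smul_quotPow_eq_zero {J : Ideal R} {n : ℕ} {r : R} (hr : r ∈ J ^ n) (a : quotPow J n) :
    r • a = 0 := by
  obtain ⟨b, rfl⟩ := Submodule.Quotient.mk_surjective _ a
  exact (Submodule.Quotient.mk_eq_zero _).2 (Ideal.mul_mem_right b _ hr)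

lemma quotPowMap_self (J : Ideal R) {n : ℕ} (h : n ≤ n) : quotPowMap J h = 𝟙 _ :=
  quotPow_hom_ext rfl

lemma quotPowMap_comp (J : Ideal R) {a b c : ℕ} (h : a ≤ b) (h' : b ≤ c) :
    quotPowMap J h' ≫ quotPowMap J h = quotPowMap J (h.trans h') :=
  quotPow_hom_ext rfl

/-- The transition map `Ext^j(R ⧸ J ^ n, M) → Ext^j(R ⧸ J ^ n', M)` for `n ≤ n'`. -/
noncomputable def extQuotPowMap (J : Ideal R) (j : ℕ) (M : ModuleCat.{u} R) (n n' : ℕ)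
    (h : n ≤ n') : Ext.{u} (quotPow J n) M j →ₗ[R] Ext.{u} (quotPow J n') M j :=
  Ext.precompOfLinear (Ext.mk₀ (quotPowMap J h)) R M (zero_add j)

lemma extQuotPowMap_apply (J : Ideal R) (j : ℕ) (M : ModuleCat.{u} R) (n n' : ℕ) (h : n ≤ n')
    (ξ : Ext.{u} (quotPow J n) M j) :
    extQuotPowMap J j M n n' h ξ = (Ext.mk₀ (quotPowMap J h)).comp ξ (zero_add j) := rfl

instance (J : Ideal R) (j : ℕ) (M : ModuleCat.{u} R) :
    DirectedSystem (fun n ↦ Ext.{u} (quotPow J n) M j) (extQuotPowMap J j M · · ·) where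
  map_self n ξ := by simp [extQuotPowMap_apply, quotPowMap_self]
  map_map _ _ _ h h' ξ := by
    simp only [extQuotPowMap_apply]
    rw [← Ext.comp_assoc_of_second_deg_zero, Ext.mk₀_comp_mk₀, quotPowMap_comp]

/-- The local cohomology module `H_J^j(M) = colim_n Ext^j(R ⧸ J ^ n, M)`, formed with the `Ext`
groups of the derived category because those come with long exact sequences; see
`localCohomologyEquiv` for the comparison with `localCohomology`. -/
abbrev LocalCohomologyModule (J : Ideal R) (j : ℕ) (M : ModuleCat.{u} R) : Type u :=
  Module.DirectLimit (fun n ↦ Ext.{u} (quotPow J n) M j) (extQuotPowMap J j M · · ·)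

namespace LocalCohomologyModule

/-- The canonical map `Ext^j(R ⧸ J ^ n, M) → H_J^j(M)`. -/
noncomputable def of (J : Ideal R) (j : ℕ) (M : ModuleCat.{u} R) (n : ℕ) :
    Ext.{u} (quotPow J n) M j →ₗ[R] LocalCohomologyModule J j M :=
  Module.DirectLimit.of R ℕ (fun n ↦ Ext.{u} (quotPow J n) M j) (extQuotPowMap J j M · · ·) n

variable {J : Ideal R} {j : ℕ} {M N : ModuleCat.{u} R}

lemma exists_of (z : LocalCohomologyModule J j M) : ∃ n ξ, of J j M n ξ = z :=
  Module.DirectLimit.exists_of z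

lemma of_extQuotPowMap {n n' : ℕ} (h : n ≤ n') (ξ : Ext.{u} (quotPow J n) M j) :
    of J j M n' (extQuotPowMap J j M n n' h ξ) = of J j M n ξ :=
  Module.DirectLimit.of_f (f := (extQuotPowMap J j M · · ·))

lemma exists_extQuotPowMap_eq_zero {n : ℕ} {ξ : Ext.{u} (quotPow J n) M j}
    (hξ : of J j M n ξ = 0) : ∃ n', ∃ h : n ≤ n', extQuotPowMap J j M n n' h ξ = 0 :=
  Module.DirectLimit.of.zero_exact (f := (extQuotPowMap J j M · · ·)) hξ

/-- The map `H_J^j(M) → H_J^j'(N)` induced by a class in `Ext^a(M, N)`, where `j + a = j'`. -/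
noncomputable def postcomp (J : Ideal R) {a : ℕ} (α : Ext.{u} M N a) {j j' : ℕ}
    (h : j + a = j') : LocalCohomologyModule J j M →ₗ[R] LocalCohomologyModule J j' N :=
  Module.DirectLimit.map (f := (extQuotPowMap J j M · · ·)) (f' := (extQuotPowMap J j' N · · ·))
    (fun n ↦ Ext.postcompOfLinear α R (quotPow J n) h) fun n n' hn ↦ by
      ext ξ
      exact Ext.comp_assoc _ _ _ (zero_add j) h (by lia)

lemma postcomp_of {a : ℕ} (α : Ext.{u} M N a) {j j' : ℕ} (h : j + a = j') (n : ℕ)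
    (ξ : Ext.{u} (quotPow J n) M j) : postcomp J α h (of J j M n ξ) = of J j' N n (ξ.comp α h) :=
  Module.DirectLimit.map_apply_of (f := (extQuotPowMap J j M · · ·))
    (f' := (extQuotPowMap J j' N · · ·)) (fun n ↦ Ext.postcompOfLinear α R (quotPow J n) h) _ ξ

/-- The map `H_J^j(M) → H_J^j(N)` induced by a linear map `M → N`. -/
noncomputable def map (J : Ideal R) (j : ℕ) (f : M ⟶ N) :
    LocalCohomologyModule J j M →ₗ[R] LocalCohomologyModule J j N :=
  postcomp J (Ext.mk₀ f) (add_zero j)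

lemma map_of (f : M ⟶ N) (n : ℕ) (ξ : Ext.{u} (quotPow J n) M j) :
    map J j f (of J j M n ξ) = of J j N n (ξ.comp (Ext.mk₀ f) (add_zero j)) :=
  postcomp_of ..

lemma map_comp_apply {K : ModuleCat.{u} R} (f : M ⟶ N) (g : N ⟶ K)
    (z : LocalCohomologyModule J j M) : map J j (f ≫ g) z = map J j g (map J j f z) := by
  obtain ⟨n, ξ, rfl⟩ := exists_of z
  simp only [map_of]
  rw [Ext.comp_assoc_of_second_deg_zero, Ext.mk₀_comp_mk₀]

lemma map_smul_id (r : R) (z : LocalCohomologyModule J j M) : map J j (r • 𝟙 M) z = r • z := by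
  obtain ⟨n, ξ, rfl⟩ := exists_of z
  rw [map_of, ← LinearMap.map_smul, Ext.smul_eq_comp_mk₀]

lemma map_zero_hom (z : LocalCohomologyModule J j M) : map J j (0 : M ⟶ N) z = 0 := by
  obtain ⟨n, ξ, rfl⟩ := exists_of z
  rw [map_of, Ext.mk₀_zero, Ext.comp_zero, map_zero]

lemma annihilator_le (J : Ideal R) (j : ℕ) (M : ModuleCat.{u} R) :
    Module.annihilator R M ≤ Module.annihilator R (LocalCohomologyModule J j M) := by
  intro r hr
  rw [Module.mem_annihilator] at hr ⊢
  intro z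
  have hzero : r • 𝟙 M = 0 := by
    ext a
    exact hr a
  rw [← map_smul_id, hzero, map_zero_hom]

section LongExactSequence

variable {S T : ShortComplex (ModuleCat.{u} R)} (hS : S.ShortExact)

/-- The connecting map `H_J^j(S.X₃) → H_J^(j+1)(S.X₁)` of a short exact sequence `S`. -/
noncomputable def δ (J : Ideal R) (hS : S.ShortExact) (j : ℕ) :
    LocalCohomologyModule J j S.X₃ →ₗ[R] LocalCohomologyModule J (j + 1) S.X₁ :=
  postcomp J hS.extClass rfl

lemma δ_of (n : ℕ) (ξ : Ext.{u} (quotPow J n) S.X₃ j) :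
    δ J hS j (of J j S.X₃ n ξ) = of J (j + 1) S.X₁ n (ξ.comp hS.extClass rfl) :=
  postcomp_of ..

include hS

lemma exists_map_f_eq (z : LocalCohomologyModule J j S.X₂) (hz : map J j S.g z = 0) :
    ∃ w, map J j S.f w = z := by
  obtain ⟨n, ξ, rfl⟩ := exists_of z
  rw [map_of] at hz
  obtain ⟨n', h, hξ⟩ := exists_extQuotPowMap_eq_zero hz
  rw [extQuotPowMap_apply, ← Ext.comp_assoc_of_third_deg_zero] at hξ
  obtain ⟨η, hη⟩ := Ext.covariant_sequence_exact₂ _ hS _ hξ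
  exact ⟨of J j _ n' η, by rw [map_of, hη, ← of_extQuotPowMap h ξ, extQuotPowMap_apply]⟩

lemma exists_map_g_eq (z : LocalCohomologyModule J j S.X₃) (hz : δ J hS j z = 0) :
    ∃ w, map J j S.g w = z := by
  obtain ⟨n, ξ, rfl⟩ := exists_of z
  rw [δ_of] at hz
  obtain ⟨n', h, hξ⟩ := exists_extQuotPowMap_eq_zero hz
  rw [extQuotPowMap_apply, ← Ext.comp_assoc _ _ _ (zero_add j) rfl (by lia)] at hξ
  obtain ⟨η, hη⟩ := Ext.covariant_sequence_exact₃ _ hS _ rfl hξ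
  exact ⟨of J j _ n' η, by rw [map_of, hη, ← of_extQuotPowMap h ξ, extQuotPowMap_apply]⟩

lemma exists_δ_eq (z : LocalCohomologyModule J (j + 1) S.X₁) (hz : map J (j + 1) S.f z = 0) :
    ∃ w, δ J hS j w = z := by
  obtain ⟨n, ξ, rfl⟩ := exists_of z
  rw [map_of] at hz
  obtain ⟨n', h, hξ⟩ := exists_extQuotPowMap_eq_zero hz
  rw [extQuotPowMap_apply, ← Ext.comp_assoc_of_third_deg_zero] at hξ
  obtain ⟨η, hη⟩ := Ext.covariant_sequence_exact₁ _ hS _ hξ rfl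
  exact ⟨of J j _ n' η, by rw [δ_of, hη, ← of_extQuotPowMap h ξ, extQuotPowMap_apply]⟩

lemma δ_naturality (hT : T.ShortExact) (f : S ⟶ T) (z : LocalCohomologyModule J j S.X₃) :
    δ J hT j (map J j f.τ₃ z) = map J (j + 1) f.τ₁ (δ J hS j z) := by
  obtain ⟨n, ξ, rfl⟩ := exists_of z
  rw [map_of, δ_of, δ_of, map_of, Ext.comp_assoc_of_third_deg_zero,
    Ext.comp_assoc_of_second_deg_zero, ShortComplex.ShortExact.extClass_naturality hS hT]

end LongExactSequence

lemma exists_pow_smul_eq_zero (z : LocalCohomologyModule J j M) :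
    ∃ n, ∀ r ∈ J ^ n, r • z = 0 := by
  obtain ⟨n, ξ, rfl⟩ := exists_of z
  refine ⟨n, fun r hr ↦ ?_⟩
  have hzero : r • 𝟙 (quotPow J n) = 0 := quotPow_hom_ext (smul_quotPow_eq_zero hr _)
  calc r • of J j M n ξ = of J j M n ((Ext.mk₀ (r • 𝟙 (quotPow J n))).comp ξ (zero_add j)) := by
        simp [Ext.mk₀_smul]
    _ = 0 := by simp [hzero]

lemma mem_annihilator_zero_iff {r : R} :
    r ∈ Module.annihilator R (LocalCohomologyModule J 0 M) ↔
      ∀ a : M, (∃ n, ∀ s ∈ J ^ n, s • a = 0) → r • a = 0 := by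
  rw [Module.mem_annihilator]
  constructor
  · rintro h a ⟨n, ha⟩
    let f : quotPow J n ⟶ M :=
      ModuleCat.ofHom ((J ^ n).liftQ (LinearMap.toSpanSingleton R M a) ha)
    have hf : of J 0 M n (r • Ext.mk₀ f) = 0 := by rw [LinearMap.map_smul, h]
    obtain ⟨n', hn, hrf⟩ := exists_extQuotPowMap_eq_zero hf
    rw [extQuotPowMap_apply, ← Ext.mk₀_smul, Ext.mk₀_comp_mk₀, Ext.mk₀_eq_zero_iff] at hrf
    calc r • a = (quotPowMap J hn ≫ (r • f)) (Submodule.Quotient.mk (1 : R)) :=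
          congrArg (r • ·) (one_smul R a).symm
      _ = 0 := by rw [hrf]; rfl
  · intro h z
    obtain ⟨n, ξ, rfl⟩ := exists_of z
    obtain ⟨f, rfl⟩ := Ext.homEquiv₀.symm.surjective ξ
    have hrf : r • f = 0 := quotPow_hom_ext <| h _ ⟨n, fun s hs ↦ by
      rw [← map_smul f.hom, smul_quotPow_eq_zero hs, map_zero f.hom]⟩
    rw [Ext.homEquiv₀_symm_apply, ← LinearMap.map_smul, ← Ext.mk₀_smul, hrf, Ext.mk₀_zero,
      map_zero]

end LocalCohomologyModule

end LocalCohomologyModule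

section Comparison

open CategoryTheory CategoryTheory.Abelian

variable {R : Type u} [CommRing R]

section Opcycles

variable (K : ChainComplex (ModuleCat.{u} R)ᵒᵖ ℕ) (n : ℕ)

lemma exists_pOpcycles_unop_eq (f : (K.X n).unop) (hf : (K.d (n + 1) n).unop f = 0) :
    ∃ c : (K.opcycles n).unop, (K.pOpcycles n).unop c = f := by
  have hexact : (ShortComplex.mk (K.d (n + 1) n) (K.pOpcycles n) (by simp)).Exact :=
    ShortComplex.exact_of_g_is_cokernel _ (K.opcyclesIsCokernel (n + 1) n (by simp))
  exact (ShortComplex.moduleCat_exact_iff _).1 hexact.unop f hf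

lemma homologyι_unop_eq_zero_iff (n' : ℕ) (hn : (ComplexShape.down ℕ).next n = n')
    (c : (K.opcycles n).unop) :
    (K.homologyι n).unop c = 0 ↔
      ∃ g : (K.X n').unop, (K.d n n').unop g = (K.pOpcycles n).unop c := by
  have hcomp (g : (K.X n').unop) :
      (K.pOpcycles n).unop ((K.fromOpcycles n n').unop g) = (K.d n n').unop g :=
    ConcreteCategory.congr_hom (congrArg Quiver.Hom.unop (K.p_fromOpcycles n n')) g
  constructor
  · have hexact : (ShortComplex.mk (K.homologyι n) (K.fromOpcycles n n') (by simp)).Exact :=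
      ShortComplex.exact_of_f_is_kernel _ (K.homologyIsKernel n n' hn)
    intro hc
    obtain ⟨g, rfl⟩ := (ShortComplex.moduleCat_exact_iff _).1 hexact.unop c hc
    exact ⟨g, (hcomp g).symm⟩
  · rintro ⟨g, hg⟩
    have hinj : Function.Injective (K.pOpcycles n).unop :=
      (ModuleCat.mono_iff_injective _).1 inferInstance
    rw [← hinj ((hcomp g).trans hg)]
    exact ConcreteCategory.congr_hom
      (congrArg Quiver.Hom.unop (K.homologyι_comp_fromOpcycles n n')) g

end Opcycles

/-- The module `Ext^n(X, Y)` defined by left derived functors, on which `localCohomology` is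
based. -/
noncomputable abbrev DerivedExt (X Y : ModuleCat.{u} R) (n : ℕ) : ModuleCat.{u} R :=
  ((_root_.Ext R (ModuleCat.{u} R) n).obj (Opposite.op X)).obj Y

variable {X X' Y : ModuleCat.{u} R} (P : ProjectiveResolution X) (P' : ProjectiveResolution X')

/-- The complex `Hom(P, Y)`, regarded as a chain complex in the opposite category as in the
definition of `DerivedExt`. -/
noncomputable abbrev homComplex (P : ProjectiveResolution X) (Y : ModuleCat.{u} R) :
    ChainComplex (ModuleCat.{u} R)ᵒᵖ ℕ :=
  (((linearYoneda R (ModuleCat.{u} R)).obj Y).rightOp.mapHomologicalComplex _).obj P.complex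

/-- The module of `n`-cocycles of `Hom(P, Y)`; it surjects onto both versions of `Ext^n(X, Y)`. -/
noncomputable abbrev HomCocycle (P : ProjectiveResolution X) (Y : ModuleCat.{u} R) (n : ℕ) :
    ModuleCat.{u} R :=
  ((homComplex P Y).opcycles n).unop

/-- The computation of `DerivedExt X Y n`, as an object of the opposite category, by a projective
resolution of `X`. -/
noncomputable def derivedExtIso (n : ℕ) :
    (((linearYoneda R (ModuleCat.{u} R)).obj Y).rightOp.leftDerived n).obj X ≅
      (homComplex P Y).homology n :=
  P.isoLeftDerivedObj _ n

variable {P P'} in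
lemma derivedExtIso_naturality {g : X' ⟶ X} (φ : ProjectiveResolution.Hom P' P g) (n : ℕ) :
    (((linearYoneda R (ModuleCat.{u} R)).obj Y).rightOp.leftDerived n).map g ≫
        (derivedExtIso P n).hom =
      (derivedExtIso P' n).hom ≫
        HomologicalComplex.homologyMap ((Functor.mapHomologicalComplex _ _).map φ.hom) n :=
  ProjectiveResolution.isoLeftDerivedObj_hom_naturality g P' P φ.hom
    φ.hom_f_zero_comp_π_f_zero _ n

namespace HomCocycle

/-- The morphism `P_n ⟶ Y` underlying a cocycle. -/
noncomputable def hom (n : ℕ) : HomCocycle P Y n →ₗ[R] (P.complex.X n ⟶ Y) :=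
  ((homComplex P Y).pOpcycles n).unop.hom

lemma d_comp_hom (n : ℕ) (c : HomCocycle P Y n) : P.complex.d (n + 1) n ≫ hom P n c = 0 :=
  ConcreteCategory.congr_hom
    (congrArg Quiver.Hom.unop ((homComplex P Y).d_pOpcycles (n + 1) n)) c

lemma exists_hom_eq (n : ℕ) (f : P.complex.X n ⟶ Y) (hf : P.complex.d (n + 1) n ≫ f = 0) :
    ∃ c, hom P n c = f :=
  exists_pOpcycles_unop_eq (homComplex P Y) n f hf

/-- The class of a cocycle in `Ext`. -/
noncomputable def toExt (n : ℕ) : HomCocycle P Y n →ₗ[R] Ext.{u} X Y n where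
  toFun c := P.extMk (hom P n c) (n + 1) rfl (d_comp_hom P n c)
  map_add' c c' := by simp only [map_add, ProjectiveResolution.add_extMk]
  map_smul' r c := by
    rw [RingHom.id_apply, Ext.smul_eq_comp_mk₀, ProjectiveResolution.extMk_comp_mk₀]
    congr 1
    simp

lemma toExt_surjective (n : ℕ) : Function.Surjective (toExt P (Y := Y) n) := by
  intro ξ
  obtain ⟨f, hf, rfl⟩ := P.extMk_surjective ξ _ rfl
  obtain ⟨c, rfl⟩ := exists_hom_eq P n f hf
  exact ⟨c, rfl⟩

/-- The class of a cocycle in `DerivedExt`. -/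
noncomputable def toDerivedExt (n : ℕ) : HomCocycle P Y n →ₗ[R] DerivedExt X Y n :=
  ((derivedExtIso P n).hom ≫ (homComplex P Y).homologyι n).unop.hom

lemma toDerivedExt_surjective (n : ℕ) : Function.Surjective (toDerivedExt P (Y := Y) n) :=
  (ModuleCat.epi_iff_surjective
    ((derivedExtIso P n).hom ≫ (homComplex P Y).homologyι n).unop).1 inferInstance

lemma toDerivedExt_eq_zero_iff (n n' : ℕ) (hn : (ComplexShape.down ℕ).next n = n')
    (c : HomCocycle P Y n) :
    toDerivedExt P n c = 0 ↔ ∃ g, P.complex.d n n' ≫ g = hom P n c := by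
  let e := (derivedExtIso P (Y := Y) n).unop
  have hinj : Function.Injective e.hom := (ModuleCat.mono_iff_injective _).1 inferInstance
  exact (map_eq_zero_iff e.hom.hom hinj).trans
    (homologyι_unop_eq_zero_iff (homComplex P Y) n n' hn c)

lemma exists_map {g : X' ⟶ X} (φ : ProjectiveResolution.Hom P' P g) (n : ℕ)
    (c : HomCocycle P Y n) :
    ∃ c' : HomCocycle P' Y n, hom P' n c' = φ.hom.f n ≫ hom P n c ∧
      toDerivedExt P' n c' =
        (((_root_.Ext R (ModuleCat.{u} R) n).map g.op).app Y) (toDerivedExt P n c) := by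
  let F := ((linearYoneda R (ModuleCat.{u} R)).obj Y).rightOp
  let ψ : homComplex P' Y ⟶ homComplex P Y := (F.mapHomologicalComplex _).map φ.hom
  have hψ : (F.leftDerived n).map g ≫ (derivedExtIso P n).hom ≫ (homComplex P Y).homologyι n =
      ((derivedExtIso P' n).hom ≫ (homComplex P' Y).homologyι n) ≫
        HomologicalComplex.opcyclesMap ψ n := by
    rw [← Category.assoc, derivedExtIso_naturality φ n, Category.assoc, Category.assoc,
      ← HomologicalComplex.homologyι_naturality ψ n]
  refine ⟨(HomologicalComplex.opcyclesMap ψ n).unop c, ?_, ?_⟩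
  · exact ConcreteCategory.congr_hom
      (congrArg Quiver.Hom.unop (HomologicalComplex.p_opcyclesMap ψ n)) c
  · exact ConcreteCategory.congr_hom (congrArg Quiver.Hom.unop hψ.symm) c

end HomCocycle

lemma extMk_zero_eq_zero_iff (f : P.complex.X 0 ⟶ Y) (hf : P.complex.d 1 0 ≫ f = 0) :
    P.extMk f 1 rfl hf = 0 ↔ f = 0 := by
  refine ⟨fun h ↦ ?_, fun h ↦ by simp [h]⟩
  rw [← P.extEquivCohomologyClass.apply_eq_iff_eq,
    ProjectiveResolution.extEquivCohomologyClass_extMk,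
    ProjectiveResolution.extEquivCohomologyClass_zero,
    CochainComplex.HomComplex.CohomologyClass.mk_eq_zero_iff,
    CochainComplex.HomComplex.Cocycle.toSingleMk_mem_coboundaries_iff _ _ _ _ _ 1 (by simp)] at h
  obtain ⟨g, hg⟩ := h
  have hX : Limits.IsZero (P.cochainComplex.X 1) :=
    CochainComplex.isZero_of_isStrictlyLE _ 0 _ (by simp)
  rw [← cancel_epi (P.cochainComplexXIso (-(0 : ℕ)) 0 rfl).hom, ← hg, hX.eq_of_src g 0]
  simp

namespace HomCocycle

lemma toExt_eq_zero_iff (n n' : ℕ) (hn : (ComplexShape.down ℕ).next n = n')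
    (c : HomCocycle P Y n) :
    toExt P n c = 0 ↔ ∃ g, P.complex.d n n' ≫ g = hom P n c := by
  rcases n with _ | n
  · have hd : P.complex.d 0 n' = 0 := P.complex.shape _ _ (by simp)
    simp only [hd, Limits.zero_comp, exists_const_iff]
    rw [eq_comm (a := 0), ← extMk_zero_eq_zero_iff P _ (d_comp_hom P 0 c)]
    exact (and_iff_right ⟨0⟩).symm
  · obtain rfl : n' = n := by simpa using hn.symm
    exact P.extMk_eq_zero_iff _ _ rfl (d_comp_hom P _ c) n' rfl

lemma ker_toExt (n : ℕ) :
    LinearMap.ker (toExt P (Y := Y) n) = LinearMap.ker (toDerivedExt P (Y := Y) n) := by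
  ext c
  rw [LinearMap.mem_ker, LinearMap.mem_ker, toExt_eq_zero_iff P n _ rfl,
    toDerivedExt_eq_zero_iff P n _ rfl]

end HomCocycle

/-- The comparison of the two versions of `Ext^n(X, Y)` through a projective resolution of `X`. -/
noncomputable def extEquiv (n : ℕ) : Ext.{u} X Y n ≃ₗ[R] DerivedExt X Y n :=
  ((HomCocycle.toExt P n).quotKerEquivOfSurjective (HomCocycle.toExt_surjective P n)).symm ≪≫ₗ
    Submodule.quotEquivOfEq _ _ (HomCocycle.ker_toExt P n) ≪≫ₗ
    (HomCocycle.toDerivedExt P n).quotKerEquivOfSurjective (HomCocycle.toDerivedExt_surjective P n)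

lemma extEquiv_toExt (n : ℕ) (c : HomCocycle P Y n) :
    extEquiv P n (HomCocycle.toExt P n c) = HomCocycle.toDerivedExt P n c := by
  simp [extEquiv, LinearMap.quotKerEquivOfSurjective_symm_apply]

lemma extEquiv_naturality (g : X' ⟶ X) (n : ℕ) (ξ : Ext.{u} X Y n) :
    extEquiv P' n ((Ext.mk₀ g).comp ξ (zero_add n)) =
      (((_root_.Ext R (ModuleCat.{u} R) n).map g.op).app Y) (extEquiv P n ξ) := by
  let φ : ProjectiveResolution.Hom P' P g :=
    ⟨ProjectiveResolution.lift g P' P, by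
      rw [ProjectiveResolution.lift_commutes_zero]; rfl⟩
  obtain ⟨c, rfl⟩ := HomCocycle.toExt_surjective P n ξ
  obtain ⟨c', hc', hcc'⟩ := HomCocycle.exists_map P P' φ n c
  have hcomp : (Ext.mk₀ g).comp (HomCocycle.toExt P n c) (zero_add n) =
      HomCocycle.toExt P' n c' := by
    refine (P.mk₀_comp_extMk _ _ rfl (HomCocycle.d_comp_hom P n c) φ).trans ?_
    simp only [← hc']
    rfl
  rw [hcomp, extEquiv_toExt, extEquiv_toExt, hcc']

section DirectLimit

variable {D : (ℕᵒᵖ)ᵒᵖ ⥤ ModuleCat.{u} R} {c : Limits.Cocone D} (hc : Limits.IsColimit c)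
  {G : ℕ → Type u} [∀ n, AddCommGroup (G n)] [∀ n, Module R (G n)]
  {f : ∀ n n', n ≤ n' → G n →ₗ[R] G n'}
  (e : ∀ n, G n ≃ₗ[R] D.obj (Opposite.op (Opposite.op n)))
  (he : ∀ n n' (h : n ≤ n') (a : G n), e n' (f n n' h a) = D.map (homOfLE h).op.op (e n a))

/-- The comparison map from the direct limit of a sequence of modules to the point of a cocone
over an isomorphic diagram. -/
noncomputable def directLimitToCoconePt (c : Limits.Cocone D)
    (e : ∀ n, G n ≃ₗ[R] D.obj (Opposite.op (Opposite.op n)))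
    (he : ∀ n n' (h : n ≤ n') (a : G n), e n' (f n n' h a) = D.map (homOfLE h).op.op (e n a)) :
    Module.DirectLimit G f →ₗ[R] c.pt :=
  Module.DirectLimit.lift R ℕ G f (fun n ↦ (c.ι.app _).hom ∘ₗ (e n).toLinearMap)
    fun n n' h a ↦ (congrArg (c.ι.app _) (he n n' h a)).trans
      (ConcreteCategory.congr_hom (c.w (homOfLE h).op.op) (e n a))

include hc in
lemma directLimitToCoconePt_bijective : Function.Bijective (directLimitToCoconePt c e he) := by
  have : Limits.PreservesFilteredColimitsOfSize.{0, 0} (forget (ModuleCat.{u} R)) :=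
    Limits.preservesSmallestFilteredColimits_of_preservesFilteredColimits.{u, u} _
  have hof (n : ℕ) (a : G n) :
      directLimitToCoconePt c e he (Module.DirectLimit.of R ℕ G f n a) = c.ι.app _ (e n a) :=
    Module.DirectLimit.lift_of _ _ a
  constructor
  · rw [injective_iff_map_eq_zero]
    intro z hz
    obtain ⟨n, a, rfl⟩ := Module.DirectLimit.exists_of z
    rw [hof] at hz
    replace hz := hz.trans (map_zero (c.ι.app (Opposite.op (Opposite.op n))).hom).symm
    obtain ⟨k, p, q, hpq⟩ := (Limits.Concrete.isColimit_rep_eq_iff_exists _ hc _ _).1 hz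
    have hn : n ≤ k.unop.unop := p.unop.unop.le
    have ha : e _ (f n _ hn a) = 0 :=
      (he n _ hn a).trans (hpq.trans (map_zero (D.map q).hom))
    rw [← Module.DirectLimit.of_f (hij := hn), (e _).map_eq_zero_iff.1 ha, map_zero]
  · intro m
    obtain ⟨k, b, rfl⟩ := Limits.Concrete.isColimit_exists_rep _ hc m
    exact ⟨Module.DirectLimit.of R ℕ G f k.unop.unop ((e _).symm b),
      (hof _ _).trans (congrArg (c.ι.app k) ((e _).apply_symm_apply b))⟩

end DirectLimit

/-- The diagram `n ↦ Ext^j(R ⧸ J ^ n, M)` whose colimit is Mathlib's local cohomology of `M`. -/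
noncomputable def localCohomologyDiagramAt (J : Ideal R) (j : ℕ) (M : ModuleCat.{u} R) :
    (ℕᵒᵖ)ᵒᵖ ⥤ ModuleCat.{u} R :=
  localCohomology.diagram (localCohomology.idealPowersDiagram J) j ⋙
    (evaluation (ModuleCat.{u} R) (ModuleCat.{u} R)).obj M

/-- The comparison isomorphism `extEquiv` at the `n`-th object of `localCohomologyDiagramAt`. -/
noncomputable def extEquivDiagramAt (J : Ideal R) (j : ℕ) (M : ModuleCat.{u} R) (n : ℕ) :
    Ext.{u} (quotPow J n) M j ≃ₗ[R]
      (localCohomologyDiagramAt J j M).obj (Opposite.op (Opposite.op n)) :=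
  (extEquiv (projectiveResolution (quotPow J n)) j :)

lemma extEquivDiagramAt_extQuotPowMap (J : Ideal R) (j : ℕ) (M : ModuleCat.{u} R) (n n' : ℕ)
    (h : n ≤ n') (ξ : Ext.{u} (quotPow J n) M j) :
    extEquivDiagramAt J j M n' (extQuotPowMap J j M n n' h ξ) =
      (localCohomologyDiagramAt J j M).map (homOfLE h).op.op (extEquivDiagramAt J j M n ξ) :=
  extEquiv_naturality _ (projectiveResolution (quotPow J n')) (quotPowMap J h) j ξ

/-- `LocalCohomologyModule` agrees with Mathlib's `localCohomology`. -/
noncomputable def localCohomologyEquiv (J : Ideal R) (j : ℕ) (M : ModuleCat.{u} R) :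
    LocalCohomologyModule J j M ≃ₗ[R] (localCohomology J j).obj M :=
  let G := localCohomology.diagram (localCohomology.idealPowersDiagram J) j
  have : Limits.HasColimit G := localCohomology.hasColimitDiagram.{u, 0} _ _
  let c : Limits.Cocone (localCohomologyDiagramAt J j M) :=
    ((evaluation (ModuleCat.{u} R) (ModuleCat.{u} R)).obj M).mapCocone (Limits.colimit.cocone G)
  have hc : Limits.IsColimit c := Limits.isColimitOfPreserves _ (Limits.colimit.isColimit G)
  LinearEquiv.ofBijective (directLimitToCoconePt c (extEquivDiagramAt J j M)
      (extEquivDiagramAt_extQuotPowMap J j M)) (directLimitToCoconePt_bijective hc _ _)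

end Comparison

section ArtinRees

open CategoryTheory CategoryTheory.Abelian

variable {R : Type u} [CommRing R] {F N F' N' : Type u} [AddCommGroup F] [Module R F]
  [AddCommGroup N] [Module R N] [AddCommGroup F'] [Module R F'] [AddCommGroup N'] [Module R N']

/-- Every linear map `f : P → N` with image in `J ^ t • N` induces the zero map
`Ext^j(N, A) → Ext^j(P, A)`. -/
def PowKillsExt (J : Ideal R) (A : ModuleCat.{u} R) (j t : ℕ) (N : Type u) [AddCommGroup N]
    [Module R N] : Prop :=
  ∀ (P : Type u) [AddCommGroup P] [Module R P] (f : P →ₗ[R] N),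
    (∀ p, f p ∈ J ^ t • (⊤ : Submodule R N)) → ∀ ξ : Ext.{u} (ModuleCat.of R N) A j,
      (Ext.mk₀ (ModuleCat.ofHom f)).comp ξ (zero_add j) = 0

/-- The morphism `(0 → ker g' → F' → N' → 0) ⟶ (0 → ker g → F → N → 0)` given by a commutative
square. -/
def shortComplexKerMap {g : F →ₗ[R] N} {g' : F' →ₗ[R] N'} {a : F' →ₗ[R] F} {b : N' →ₗ[R] N}
    (h : g ∘ₗ a = b ∘ₗ g') : g'.shortComplexKer ⟶ g.shortComplexKer where
  τ₁ := ModuleCat.ofHom (a.restrict fun v hv ↦ by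
    rw [LinearMap.mem_ker] at hv ⊢
    rw [← LinearMap.comp_apply, h, LinearMap.comp_apply, hv, map_zero])
  τ₂ := ModuleCat.ofHom a
  τ₃ := ModuleCat.ofHom b
  comm₁₂ := rfl
  comm₂₃ := ModuleCat.hom_ext h

lemma PowKillsExt.comp_eq_zero {J : Ideal R} {A : ModuleCat.{u} R} {j t : ℕ}
    {g : F →ₗ[R] N} {g' : F' →ₗ[R] N'} {a : F' →ₗ[R] F} {b : N' →ₗ[R] N} [Module.Projective R F]
    (hker : PowKillsExt J A j t (LinearMap.ker g))
    (hg : Function.Surjective g) (hg' : Function.Surjective g') (h : g ∘ₗ a = b ∘ₗ g')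
    (ha : ∀ v ∈ LinearMap.ker g', a v ∈ J ^ t • LinearMap.ker g)
    (ξ : Ext.{u} (ModuleCat.of R N) A (j + 1)) :
    (Ext.mk₀ (ModuleCat.ofHom b)).comp ξ (zero_add (j + 1)) = 0 := by
  have hS := LinearMap.shortExact_shortComplexKer hg
  have hS' := LinearMap.shortExact_shortComplexKer hg'
  have : Projective g.shortComplexKer.X₂ := (IsProjective.iff_projective F).1 inferInstance
  obtain ⟨η, rfl⟩ := precomp_extClass_surjective_of_projective_X₂ A hS j ξ
  have hη : (Ext.mk₀ (shortComplexKerMap h).τ₁).comp η (zero_add j) = 0 :=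
    hker _ (shortComplexKerMap h).τ₁.hom (fun v ↦ (Submodule.mem_smul_top_iff _ _ _).2 (ha v v.2)) η
  have hnat : hS'.extClass.comp (Ext.mk₀ (shortComplexKerMap h).τ₁) (add_zero 1) =
      (Ext.mk₀ (ModuleCat.ofHom b)).comp hS.extClass (zero_add 1) :=
    ShortComplex.ShortExact.extClass_naturality hS' hS (shortComplexKerMap h)
  calc (Ext.mk₀ (ModuleCat.ofHom b)).comp (hS.extClass.comp η (add_comm 1 j)) (zero_add (j + 1))
      = ((Ext.mk₀ (ModuleCat.ofHom b)).comp hS.extClass (zero_add 1)).comp η (add_comm 1 j) :=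
        (Ext.comp_assoc _ _ _ (zero_add 1) (add_comm 1 j) (by lia)).symm
    _ = hS'.extClass.comp ((Ext.mk₀ (shortComplexKerMap h).τ₁).comp η (zero_add j))
          (add_comm 1 j) := by
        rw [← hnat, Ext.comp_assoc _ _ _ (add_zero 1) (zero_add j) (by lia)]
    _ = 0 := by rw [hη, Ext.comp_zero]

lemma powKillsExt_zero {J : Ideal R} {A : ModuleCat.{u} R} {k : ℕ}
    (hA : J ^ k ≤ Module.annihilator R A) : PowKillsExt J A 0 k N := by
  intro P _ _ f hf ξ
  obtain ⟨g, rfl⟩ := Ext.homEquiv₀.symm.surjective ξ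
  have hker : J ^ k • (⊤ : Submodule R N) ≤ LinearMap.ker g.hom :=
    Submodule.smul_le.2 fun r hr x _ ↦
      (map_smul g.hom r x).trans (Module.mem_annihilator.1 (hA hr) _)
  have hfg : ModuleCat.ofHom f ≫ g = 0 :=
    ModuleCat.hom_ext (LinearMap.ext fun p ↦ hker (hf p))
  rw [Ext.homEquiv₀_symm_apply, Ext.mk₀_comp_mk₀, hfg, Ext.mk₀_zero]

/-- The pullback of `f : P → N` and `g : F → N`, cut down to those pairs whose second coordinate
lies in `I • F`. -/
def smulPullback (I : Ideal R) (f : N' →ₗ[R] N) (g : F →ₗ[R] N) : Submodule R (N' × F) :=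
  LinearMap.eqLocus (f ∘ₗ LinearMap.fst R N' F) (g ∘ₗ LinearMap.snd R N' F) ⊓
    (I • (⊤ : Submodule R F)).comap (LinearMap.snd R N' F)

lemma smulPullback_fst_surjective {I : Ideal R} {f : N' →ₗ[R] N} {g : F →ₗ[R] N}
    (hg : Function.Surjective g) (hf : ∀ p, f p ∈ I • (⊤ : Submodule R N)) :
    Function.Surjective (LinearMap.fst R N' F ∘ₗ (smulPullback I f g).subtype) := by
  intro p
  obtain ⟨v, hv, hvp⟩ : f p ∈ (I • (⊤ : Submodule R F)).map g := by
    rw [Submodule.map_smul'', Submodule.map_top, LinearMap.range_eq_top.2 hg]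
    exact hf p
  exact ⟨⟨(p, v), hvp.symm, hv⟩, rfl⟩

/-- The exponent at each step comes from the Artin–Rees lemma for the kernel of a finite free
cover of `N`. -/
lemma exists_powKillsExt [IsNoetherianRing R] {J : Ideal R} {A : ModuleCat.{u} R} {k : ℕ}
    (hA : J ^ k ≤ Module.annihilator R A) (j : ℕ) (N : Type u) [AddCommGroup N] [Module R N]
    [Module.Finite R N] : ∃ t, PowKillsExt J A j t N := by
  induction j generalizing N with
  | zero => exact ⟨k, powKillsExt_zero hA⟩
  | succ j ih =>
    obtain ⟨n, g, hg⟩ := Module.Finite.exists_fin' R N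
    obtain ⟨s, hs⟩ := ih (LinearMap.ker g)
    obtain ⟨c, hc⟩ := Ideal.exists_pow_inf_eq_pow_smul J (LinearMap.ker g)
    refine ⟨c + s, fun P _ _ f hf ξ ↦ ?_⟩
    let W := smulPullback (J ^ (c + s)) f g
    have hcomm : g ∘ₗ LinearMap.snd R P _ ∘ₗ W.subtype = f ∘ₗ LinearMap.fst R P _ ∘ₗ W.subtype :=
      LinearMap.ext fun w ↦ w.2.1.symm
    refine hs.comp_eq_zero hg (smulPullback_fst_surjective hg hf) hcomm (fun w hw ↦ ?_) ξ
    have hgw : g w.1.2 = 0 := w.2.1.symm.trans ((congrArg f hw).trans (map_zero f))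
    have hw' : w.1.2 ∈ J ^ (c + s) • (⊤ : Submodule R (Fin n → R)) ⊓ LinearMap.ker g :=
      ⟨w.2.2, hgw⟩
    rw [hc _ (Nat.le_add_right c s), Nat.add_sub_cancel_left] at hw'
    exact Submodule.smul_mono le_rfl inf_le_right hw'

lemma LocalCohomologyModule.eq_zero_of_pow_le_annihilator [IsNoetherianRing R] {J : Ideal R}
    {A : ModuleCat.{u} R} {k : ℕ} (hA : J ^ k ≤ Module.annihilator R A) {j : ℕ}
    (z : LocalCohomologyModule J (j + 1) A) : z = 0 := by
  obtain ⟨n, ξ, rfl⟩ := exists_of z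
  obtain ⟨t, ht⟩ := exists_powKillsExt hA j (LinearMap.ker (J ^ n).mkQ)
  have hle : n ≤ n + t := Nat.le_add_right n t
  have hcomp : (Ext.mk₀ (quotPowMap J hle)).comp ξ (zero_add (j + 1)) = 0 := by
    refine ht.comp_eq_zero (g' := (J ^ (n + t)).mkQ) (a := LinearMap.id) (J ^ n).mkQ_surjective
      (J ^ (n + t)).mkQ_surjective rfl (fun v hv ↦ ?_) ξ
    rw [Submodule.ker_mkQ] at hv ⊢
    rwa [smul_eq_mul, ← pow_add, add_comm]
  rw [← of_extQuotPowMap hle, extQuotPowMap_apply, hcomp, map_zero]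

end ArtinRees

section Saturation

open scoped Pointwise

variable {R : Type u} [CommRing R] {M : Type u} [AddCommGroup M] [Module R M]

/-- The saturation `N :_M J^∞` of the submodule `N` with respect to the ideal `J`. -/
def saturation (J : Ideal R) (N : Submodule R M) : Submodule R M where
  carrier := {a | ∃ n, ∀ s ∈ J ^ n, s • a ∈ N}
  zero_mem' := ⟨0, fun s _ ↦ by rw [smul_zero]; exact N.zero_mem⟩
  add_mem' := by
    rintro a b ⟨n, hn⟩ ⟨m, hm⟩
    refine ⟨n + m, fun s hs ↦ ?_⟩
    rw [smul_add]
    exact N.add_mem (hn s (Ideal.pow_le_pow_right (Nat.le_add_right n m) hs))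
      (hm s (Ideal.pow_le_pow_right (Nat.le_add_left m n) hs))
  smul_mem' := by
    rintro c a ⟨n, hn⟩
    exact ⟨n, fun s hs ↦ smul_comm c s a ▸ N.smul_mem c (hn s hs)⟩

/-- The submodule `N :_M x` of all `a : M` with `x • a ∈ N`. -/
def colonElem (N : Submodule R M) (x : R) : Submodule R M :=
  N.comap (LinearMap.lsmul R M x)

variable {J : Ideal R} {N K : Submodule R M} {x : R} {a : M}

lemma mem_colonElem : a ∈ colonElem N x ↔ x • a ∈ N := Iff.rfl

lemma le_saturation (J : Ideal R) (N : Submodule R M) : N ≤ saturation J N :=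
  fun _ ha ↦ ⟨0, fun s _ ↦ N.smul_mem s ha⟩

lemma le_colonElem (N : Submodule R M) (x : R) : N ≤ colonElem N x := fun _ ha ↦ N.smul_mem x ha

lemma colonElem_le_colonElem_pow (N : Submodule R M) (x : R) (n : ℕ) :
    colonElem N x ≤ colonElem N (x ^ (n + 1)) := by
  intro a ha
  rw [mem_colonElem, pow_succ, mul_smul]
  exact N.smul_mem _ ha

lemma exists_pow_smul_le (hK : K.FG) (h : K ≤ saturation J N) : ∃ n, J ^ n • K ≤ N := by
  induction K, hK using Submodule.fg_induction with
  | singleton a =>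
    obtain ⟨n, hn⟩ := h (Submodule.mem_span_singleton_self a)
    refine ⟨n, Submodule.smul_le.2 fun s hs b hb ↦ ?_⟩
    obtain ⟨c, rfl⟩ := Submodule.mem_span_singleton.1 hb
    exact smul_comm c s a ▸ N.smul_mem c (hn s hs)
  | sup K₁ K₂ _ _ ih₁ ih₂ =>
    obtain ⟨n, hn⟩ := ih₁ (le_sup_left.trans h)
    obtain ⟨m, hm⟩ := ih₂ (le_sup_right.trans h)
    refine ⟨n + m, ?_⟩
    rw [Submodule.smul_sup, sup_le_iff]
    exact ⟨(Submodule.smul_mono_left (Ideal.pow_le_pow_right (Nat.le_add_right n m))).trans hn,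
      (Submodule.smul_mono_left (Ideal.pow_le_pow_right (Nat.le_add_left m n))).trans hm⟩

lemma saturation_saturation_le [IsNoetherian R M] (J : Ideal R) (N : Submodule R M) :
    saturation J (saturation J N) ≤ saturation J N := by
  rintro a ⟨n, hn⟩
  obtain ⟨m, hm⟩ := exists_pow_smul_le (IsNoetherian.noetherian (saturation J N)) le_rfl
  refine ⟨m + n, fun s hs ↦ ?_⟩
  rw [pow_add] at hs
  refine Submodule.mul_induction_on hs (fun p hp q hq ↦ ?_) fun p q hp hq ↦ ?_
  · rw [mul_smul]
    exact hm (Submodule.smul_mem_smul hp (hn q hq))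
  · rw [add_smul]
    exact N.add_mem hp hq

lemma exists_pow_le_annihilator_ker_factor [IsNoetherian R M] (h : N ≤ K)
    (hK : K ≤ saturation J N) :
    ∃ n, J ^ n ≤ Module.annihilator R (LinearMap.ker (Submodule.factor h)) := by
  obtain ⟨n, hn⟩ := exists_pow_smul_le (IsNoetherian.noetherian K) hK
  refine ⟨n, fun s hs ↦ Module.mem_annihilator.2 ?_⟩
  rintro ⟨a, ha⟩
  obtain ⟨a, rfl⟩ := N.mkQ_surjective a
  have haK : a ∈ K := (Submodule.Quotient.mk_eq_zero K).1 ha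
  exact Subtype.ext ((Submodule.Quotient.mk_eq_zero N).2 (hn (Submodule.smul_mem_smul hs haK)))

end Saturation

section Multiplication

open CategoryTheory LocalCohomologyModule
open scoped Pointwise

variable {R : Type u} [CommRing R] {M : Type u} [AddCommGroup M] [Module R M]

/-- The canonical projection `M ⧸ N → M ⧸ K` for `N ≤ K`, as a morphism in `ModuleCat R`. -/
noncomputable abbrev quotProj {N K : Submodule R M} (h : N ≤ K) :
    ModuleCat.of R (M ⧸ N) ⟶ ModuleCat.of R (M ⧸ K) :=
  ModuleCat.ofHom (Submodule.factor h)

/-- The map `M ⧸ (N :_M x) → M ⧸ N` induced by multiplication by `x`. -/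
noncomputable def colonElemMul (N : Submodule R M) (x : R) : M ⧸ colonElem N x →ₗ[R] M ⧸ N :=
  (colonElem N x).mapQ N (LinearMap.lsmul R M x) fun _ ha ↦ ha

lemma colonElemMul_injective (N : Submodule R M) (x : R) :
    Function.Injective (colonElemMul N x) := by
  rw [injective_iff_map_eq_zero]
  intro a ha
  obtain ⟨a, rfl⟩ := (colonElem N x).mkQ_surjective a
  exact (Submodule.Quotient.mk_eq_zero _).2 ((Submodule.Quotient.mk_eq_zero N).1 ha)

lemma exact_colonElemMul_factor (N : Submodule R M) (x : R) :
    Function.Exact (colonElemMul N x) (Submodule.factor (le_sup_left : N ≤ N ⊔ x • ⊤)) := by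
  intro a
  obtain ⟨a, rfl⟩ := N.mkQ_surjective a
  constructor
  · intro ha
    obtain ⟨b, hb, c, hc, rfl⟩ := Submodule.mem_sup.1 ((Submodule.Quotient.mk_eq_zero _).1 ha)
    obtain ⟨d, -, rfl⟩ := (Submodule.mem_smul_pointwise_iff_exists _ _ _).1 hc
    refine ⟨Submodule.Quotient.mk d, (Submodule.Quotient.eq N).2 ?_⟩
    simpa using hb
  · rintro ⟨b, hb⟩
    obtain ⟨b, rfl⟩ := (colonElem N x).mkQ_surjective b
    rw [← hb]
    exact (Submodule.Quotient.mk_eq_zero _).2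
      (Submodule.mem_sup_right (Submodule.smul_mem_pointwise_smul b x ⊤ trivial))

/-- The sequence `0 → M ⧸ (N :_M x) → M ⧸ N → M ⧸ (N + x M) → 0`. -/
noncomputable abbrev mulShortComplex (N : Submodule R M) (x : R) : ShortComplex (ModuleCat.{u} R) :=
  ModuleCat.shortComplexOfCompEqZero _ _ (exact_colonElemMul_factor N x).linearMap_comp_eq_zero

lemma mulShortComplex_shortExact (N : Submodule R M) (x : R) : (mulShortComplex N x).ShortExact :=
  ModuleCat.shortComplex_shortExact _ (exact_colonElemMul_factor N x) (colonElemMul_injective N x)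
    (Submodule.factor_surjective le_sup_left)

/-- The map `M ⧸ (N + x M) → M ⧸ (N + x ^ (n + 1) M)` induced by multiplication by `x ^ n`. -/
noncomputable def supSmulPow (N : Submodule R M) (x : R) (n : ℕ) :
    M ⧸ (N ⊔ x • ⊤) →ₗ[R] M ⧸ (N ⊔ x ^ (n + 1) • ⊤) :=
  Submodule.mapQ _ _ (LinearMap.lsmul R M (x ^ n)) <| by
    refine sup_le (fun b hb ↦ Submodule.mem_sup_left (N.smul_mem _ hb)) fun b hb ↦ ?_
    obtain ⟨c, -, rfl⟩ := (Submodule.mem_smul_pointwise_iff_exists _ _ _).1 hb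
    refine Submodule.mem_sup_right ?_
    rw [LinearMap.lsmul_apply, smul_smul, ← pow_succ]
    exact Submodule.smul_mem_pointwise_smul c _ ⊤ trivial

/-- The morphism of multiplication sequences given by the projection on the left and by
multiplication by `x ^ n` in the middle and on the right. -/
noncomputable def mulShortComplexPow (N : Submodule R M) (x : R) (n : ℕ) :
    mulShortComplex N x ⟶ mulShortComplex N (x ^ (n + 1)) where
  τ₁ := quotProj (colonElem_le_colonElem_pow N x n)
  τ₂ := ModuleCat.ofHom (LinearMap.lsmul R (M ⧸ N) (x ^ n))
  τ₃ := ModuleCat.ofHom (supSmulPow N x n)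
  comm₁₂ := ModuleCat.hom_ext <| Submodule.linearMap_qext _ <| LinearMap.ext fun a ↦
    congrArg N.mkQ ((congrArg (· • a) (pow_succ x n)).trans (mul_smul _ _ a))
  comm₂₃ := ModuleCat.hom_ext <| Submodule.linearMap_qext _ rfl

lemma map_colonElemMul_map_quotProj {J : Ideal R} {j : ℕ} (N : Submodule R M) (x : R)
    (z : LocalCohomologyModule J j (ModuleCat.of R (M ⧸ N))) :
    map J j (mulShortComplex N x).f (map J j (quotProj (le_colonElem N x)) z) = x • z := by
  have hcomp : quotProj (le_colonElem N x) ≫ (mulShortComplex N x).f = x • 𝟙 _ :=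
    ModuleCat.hom_ext <| Submodule.linearMap_qext _ rfl
  rw [← map_smul_id, ← hcomp, map_comp_apply]

/-- The ideal of all elements of `R` that annihilate `H_J^j(M ⧸ N)`. -/
noncomputable def cohomologyAnnihilator (J : Ideal R) (j : ℕ) (N : Submodule R M) : Ideal R :=
  Module.annihilator R (LocalCohomologyModule J j (ModuleCat.of R (M ⧸ N)))

variable {J : Ideal R} {j : ℕ} {N K : Submodule R M} {x r : R}

lemma mem_cohomologyAnnihilator : r ∈ cohomologyAnnihilator J j N ↔
    ∀ z : LocalCohomologyModule J j (ModuleCat.of R (M ⧸ N)), r • z = 0 :=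
  Module.mem_annihilator

lemma colon_univ_le_cohomologyAnnihilator (J : Ideal R) (j : ℕ) (N : Submodule R M) :
    N.colon Set.univ ≤ cohomologyAnnihilator J j N :=
  N.annihilator_quotient.symm.trans_le <|
    LocalCohomologyModule.annihilator_le J j (ModuleCat.of R (M ⧸ N))

lemma mem_cohomologyAnnihilator_zero :
    r ∈ cohomologyAnnihilator J 0 N ↔ ∀ a ∈ saturation J N, r • a ∈ N := by
  have hmk (s : R) (a : M) : s • (Submodule.Quotient.mk a : M ⧸ N) = 0 ↔ s • a ∈ N :=
    Submodule.Quotient.mk_eq_zero N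
  refine mem_annihilator_zero_iff.trans (N.mkQ_surjective.forall.trans ?_)
  simp only [Submodule.mkQ_apply, hmk]
  rfl

lemma map_quotProj_map_quotProj {K K' : Submodule R M} (h : N ≤ K) (h' : K ≤ K')
    (ξ : LocalCohomologyModule J j (ModuleCat.of R (M ⧸ N))) :
    map J j (quotProj h') (map J j (quotProj h) ξ) = map J j (quotProj (h.trans h')) ξ := by
  have hcomp : quotProj h ≫ quotProj h' = quotProj (h.trans h') :=
    ModuleCat.hom_ext (Submodule.factor_comp h h')
  rw [← hcomp, map_comp_apply]

lemma self_mem_cohomologyAnnihilator_sup (J : Ideal R) (j : ℕ) (N : Submodule R M) (x : R) :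
    x ∈ cohomologyAnnihilator J j (N ⊔ x • ⊤) :=
  colon_univ_le_cohomologyAnnihilator J j _ <| Submodule.mem_colon.2 fun a _ ↦
    Submodule.mem_sup_right (Submodule.smul_mem_pointwise_smul a x ⊤ trivial)

section Noetherian

variable [IsNoetherianRing R] [Module.Finite R M]

lemma map_quotProj_surjective (h : N ≤ K) (hK : K ≤ saturation J N) (j : ℕ) :
    Function.Surjective (map J j (quotProj h)) := by
  obtain ⟨n, hn⟩ := exists_pow_le_annihilator_ker_factor h hK
  have hS := LinearMap.shortExact_shortComplexKer (Submodule.factor_surjective h)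
  exact fun z ↦ exists_map_g_eq hS z (eq_zero_of_pow_le_annihilator hn _)

lemma map_quotProj_injective (h : N ≤ K) (hK : K ≤ saturation J N) (j : ℕ) :
    Function.Injective (map J (j + 1) (quotProj h)) := by
  obtain ⟨n, hn⟩ := exists_pow_le_annihilator_ker_factor h hK
  have hS := LinearMap.shortExact_shortComplexKer (Submodule.factor_surjective h)
  rw [injective_iff_map_eq_zero]
  intro z hz
  obtain ⟨w, rfl⟩ := exists_map_f_eq hS z hz
  rw [eq_zero_of_pow_le_annihilator hn w, map_zero]

lemma cohomologyAnnihilator_mono (h : N ≤ K) (hK : K ≤ saturation J N) (j : ℕ) :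
    cohomologyAnnihilator J j N ≤ cohomologyAnnihilator J j K := by
  intro r hr
  rw [mem_cohomologyAnnihilator] at hr ⊢
  intro z
  obtain ⟨w, rfl⟩ := map_quotProj_surjective h hK j z
  rw [← LinearMap.map_smul, hr, map_zero]

lemma exists_smul_eq_of_map_quotProj_eq_zero (hx : colonElem N x ≤ saturation J N)
    {ξ : LocalCohomologyModule J j (ModuleCat.of R (M ⧸ N))}
    (hξ : map J j (quotProj (le_sup_left : N ≤ N ⊔ x • ⊤)) ξ = 0) : ∃ ζ, x • ζ = ξ := by
  obtain ⟨w, rfl⟩ := exists_map_f_eq (mulShortComplex_shortExact N x) ξ hξ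
  obtain ⟨ζ, rfl⟩ := map_quotProj_surjective (le_colonElem N x) hx j w
  exact ⟨ζ, (map_colonElemMul_map_quotProj N x ζ).symm⟩

lemma exists_map_quotProj_eq_smul (hx : colonElem N x ≤ saturation J N)
    (hr : r ∈ cohomologyAnnihilator J (j + 1) N)
    (ξ : LocalCohomologyModule J j (ModuleCat.of R (M ⧸ (N ⊔ x • ⊤)))) :
    ∃ ζ, map J j (quotProj le_sup_left) ζ = r • ξ := by
  refine exists_map_g_eq (mulShortComplex_shortExact N x) (r • ξ) ?_
  have hr' := cohomologyAnnihilator_mono (le_colonElem N x) hx (j + 1) hr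
  rw [map_smul]
  exact mem_cohomologyAnnihilator.1 hr' _

lemma cohomologyAnnihilator_mul_le (hx : colonElem N x ≤ saturation J N) (j : ℕ) :
    cohomologyAnnihilator J j N * cohomologyAnnihilator J (j + 1) N ≤
      cohomologyAnnihilator J j (N ⊔ x • ⊤) := by
  refine Ideal.mul_le.2 fun r hr s hs ↦ mem_cohomologyAnnihilator.2 fun ξ ↦ ?_
  obtain ⟨ζ, hζ⟩ := exists_map_quotProj_eq_smul hx hs ξ
  rw [mul_smul, ← hζ, ← map_smul, mem_cohomologyAnnihilator.1 hr, map_zero]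

lemma smul_eq_zero_of_mem_cohomologyAnnihilator_sup (hx : colonElem N x ≤ saturation J N)
    (hr : r ∈ cohomologyAnnihilator J j (N ⊔ x • ⊤))
    {ξ : LocalCohomologyModule J (j + 1) (ModuleCat.of R (M ⧸ N))} (hξ : x • ξ = 0) :
    r • ξ = 0 := by
  rw [← map_colonElemMul_map_quotProj] at hξ
  obtain ⟨w, hw⟩ := exists_δ_eq (mulShortComplex_shortExact N x) _ hξ
  apply map_quotProj_injective (le_colonElem N x) hx
  rw [map_smul, ← hw, ← map_smul, mem_cohomologyAnnihilator.1 hr, map_zero, map_zero]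

/-- Modulo the image of `M ⧸ N`, every class of `M ⧸ (N + x ^ (n + 1) M)` comes from
`M ⧸ (N + x M)`. -/
lemma mem_cohomologyAnnihilator_sup_pow {n : ℕ} (hx : colonElem N (x ^ (n + 1)) ≤ saturation J N)
    (hxN : x ∈ cohomologyAnnihilator J (j + 1) N) (hrN : r ∈ cohomologyAnnihilator J j N)
    (hr : r ∈ cohomologyAnnihilator J j (N ⊔ x • ⊤)) :
    r ∈ cohomologyAnnihilator J j (N ⊔ x ^ (n + 1) • ⊤) := by
  rw [mem_cohomologyAnnihilator] at hxN hrN hr ⊢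
  intro ξ
  have hS := mulShortComplex_shortExact N x
  have hS' := mulShortComplex_shortExact N (x ^ (n + 1))
  let φ := mulShortComplexPow N x n
  obtain ⟨w, hw⟩ := map_quotProj_surjective (le_colonElem N _) hx (j + 1) (δ J hS' j ξ)
  obtain ⟨v, hv⟩ := exists_δ_eq hS (map J (j + 1) (quotProj (le_colonElem N x)) w) <|
    (map_colonElemMul_map_quotProj N x w).trans (hxN w)
  have hδ : δ J hS' j (ξ - map J j φ.τ₃ v) = 0 := by
    have hcomp : quotProj (le_colonElem N x) ≫ φ.τ₁ = quotProj (le_colonElem N (x ^ (n + 1))) :=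
      ModuleCat.hom_ext <|
        Submodule.factor_comp (le_colonElem N x) (colonElem_le_colonElem_pow N x n)
    rw [map_sub, δ_naturality hS hS' φ, hv, ← map_comp_apply, hcomp, hw, sub_self]
  obtain ⟨ζ, hζ⟩ := exists_map_g_eq hS' _ hδ
  rw [← sub_add_cancel ξ (map J j φ.τ₃ v), ← hζ, smul_add, ← map_smul, ← map_smul, hrN, hr,
    map_zero, map_zero, add_zero]

end Noetherian

end Multiplication

section Dimension

open scoped Pointwise

variable {R : Type u} [CommRing R] {M : Type u} [AddCommGroup M] [Module R M]
  {N : Submodule R M} {z : R} {b : M}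

lemma ringKrullDim_quotient_anti {I J : Ideal R} (h : I ≤ J) :
    ringKrullDim (R ⧸ J) ≤ ringKrullDim (R ⧸ I) :=
  ringKrullDim_le_of_surjective (Ideal.Quotient.factor h) (Ideal.Quotient.factor_surjective h)

lemma mem_of_ringKrullDim_quotient_colon_lt_zero (h : ringKrullDim (R ⧸ N.colon {b}) < 0) :
    b ∈ N := by
  by_contra hb
  have : Nontrivial (R ⧸ N.colon {b}) :=
    Ideal.Quotient.nontrivial_iff.2 ((Ideal.ne_top_iff_one _).2 (by simpa using hb))
  exact h.not_ge ringKrullDim_nonneg_of_nontrivial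

lemma ringKrullDim_quotient_colon_sup_succ_le (hz : IsSMulRegular (M ⧸ N) z) (b : M) :
    ringKrullDim (R ⧸ (N ⊔ z • ⊤).colon {b}) + 1 ≤ ringKrullDim (R ⧸ N.colon {b}) := by
  have hle : N.colon {b} ≤ (N ⊔ z • ⊤).colon {b} := Submodule.colon_mono le_sup_left le_rfl
  refine ringKrullDim_succ_le_of_surjective (Ideal.Quotient.factor hle)
    (Ideal.Quotient.factor_surjective hle) (r := Ideal.Quotient.mk _ z) ?_ ?_
  · refine mem_nonZeroDivisors_iff_left.2 fun s hs ↦ ?_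
    obtain ⟨s, rfl⟩ := Ideal.Quotient.mk_surjective s
    rw [← map_mul, Ideal.Quotient.eq_zero_iff_mem, Submodule.mem_colon_singleton, mul_smul] at hs
    rw [Ideal.Quotient.eq_zero_iff_mem, Submodule.mem_colon_singleton]
    exact mem_of_isSMulRegular_quotient_of_smul_mem hz hs
  · rw [Ideal.Quotient.factor_mk, Ideal.Quotient.eq_zero_iff_mem, Submodule.mem_colon_singleton]
    exact Submodule.mem_sup_right (Submodule.smul_mem_pointwise_smul b z ⊤ trivial)

variable [IsLocalRing R]

lemma ringKrullDim_quotient_nonpos {A : Ideal R} (hA : maximalIdeal R ≤ A.radical) :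
    ringKrullDim (R ⧸ A) ≤ 0 := by
  refine Ring.krullDimLE_iff.1 <|
    (Ideal.krullDimLE_zero_quotient_iff_forall_minimalPrimes_isMaximal.2 fun P hP ↦ ?_)
  have hPmax : maximalIdeal R = P := (maximalIdeal.isMaximal R).eq_of_le hP.1.1.ne_top
    (hA.trans (hP.1.1.radical_le_iff.2 hP.1.2))
  exact hPmax ▸ maximalIdeal.isMaximal R

lemma ringKrullDim_quotient_le_length [IsNoetherianRing R] {A : Ideal R} {L : List R}
    (hL : ∀ l ∈ L, l ∈ maximalIdeal R) (h : maximalIdeal R ≤ (A ⊔ Ideal.ofList L).radical) :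
    ringKrullDim (R ⧸ A) ≤ L.length := by
  classical
  rcases eq_or_ne A ⊤ with rfl | hA
  · rw [ringKrullDim_eq_bot_of_subsingleton]
    exact bot_le
  have := Ideal.Quotient.nontrivial_iff.2 hA
  have := IsLocalRing.of_surjective' _ (Ideal.Quotient.mk_surjective (I := A))
  let s : Finset (R ⧸ A) := L.toFinset.image (Ideal.Quotient.mk A)
  have hs : Ideal.span (s : Set (R ⧸ A)) = (Ideal.ofList L).map (Ideal.Quotient.mk A) := by
    rw [Ideal.ofList, Ideal.map_span, Finset.coe_image, List.coe_toFinset]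
  have hdim : ringKrullDim ((R ⧸ A) ⧸ Ideal.span (s : Set (R ⧸ A))) ≤ 0 := by
    rw [hs, ringKrullDim_eq_of_ringEquiv (DoubleQuot.quotQuotEquivQuotSup A _)]
    exact ringKrullDim_quotient_nonpos h
  have hcard : s.card ≤ L.length := Finset.card_image_le.trans L.toFinset_card_le
  refine (ringKrullDim_le_ringKrullDim_quotient_add_card s ?_).trans ?_
  · rw [ringJacobson_eq_maximalIdeal, Finset.coe_image, List.coe_toFinset, Set.image_subset_iff,
      ← map_maximalIdeal_of_surjective _ (Ideal.Quotient.mk_surjective (I := A))]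
    exact fun l hl ↦ Ideal.mem_map_of_mem _ (hL l hl)
  · calc _ ≤ (0 : WithBot ℕ∞) + s.card := by gcongr
      _ ≤ L.length := by rw [zero_add]; exact_mod_cast hcard

end Dimension

section SmallDimension

open scoped Pointwise

variable {R : Type u} [CommRing R] [IsLocalRing R] [IsNoetherianRing R]
  {M : Type u} [AddCommGroup M] [Module R M] [Module.Finite R M] {N : Submodule R M}

lemma exists_isSMulRegular_of_saturation_le (hN : saturation (maximalIdeal R) N ≤ N) :
    ∃ z ∈ maximalIdeal R, IsSMulRegular (M ⧸ N) z := by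
  have hom_eq_zero (f : (R ⧸ maximalIdeal R) →ₗ[R] (M ⧸ N)) : f = 0 := by
    refine Submodule.linearMap_qext _ (LinearMap.ext_ring ?_)
    obtain ⟨a, ha⟩ := N.mkQ_surjective (f (Submodule.Quotient.mk 1))
    refine ha.symm.trans ((Submodule.Quotient.mk_eq_zero N).2 (hN ⟨1, fun s hs ↦ ?_⟩))
    have hs' : s • (Submodule.Quotient.mk 1 : R ⧸ maximalIdeal R) = 0 :=
      (Submodule.Quotient.mk_eq_zero _).2 (Ideal.mul_mem_right 1 _ (pow_one (maximalIdeal R) ▸ hs))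
    rw [← Submodule.Quotient.mk_eq_zero, Submodule.Quotient.mk_smul, ← Submodule.mkQ_apply, ha,
      ← map_smul, hs', map_zero]
  have : Subsingleton ((R ⧸ maximalIdeal R) →ₗ[R] (M ⧸ N)) :=
    subsingleton_of_forall_eq 0 hom_eq_zero
  simpa only [Ideal.annihilator_quotient] using IsSMulRegular.subsingleton_linearMap_iff.1 this

lemma mem_of_forall_mem_sup_pow_smul {z : R} (hz : z ∈ maximalIdeal R) {b : M}
    (hb : ∀ n : ℕ, b ∈ N ⊔ z ^ n • ⊤) : b ∈ N := by
  have hspan : Ideal.span {z} ≠ ⊤ := fun h ↦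
    (maximalIdeal.isMaximal R).ne_top (top_le_iff.1 (h ▸ (Ideal.span_singleton_le_iff_mem _).2 hz))
  rw [← Submodule.Quotient.mk_eq_zero, ← Submodule.mem_bot R,
    ← Ideal.iInf_pow_smul_eq_bot_of_isLocalRing (M := M ⧸ N) _ hspan, Submodule.mem_iInf]
  intro n
  obtain ⟨p, hp, q, hq, rfl⟩ := Submodule.mem_sup.1 (hb n)
  obtain ⟨c, -, rfl⟩ := (Submodule.mem_smul_pointwise_iff_exists _ _ _).1 hq
  rw [Submodule.Quotient.mk_add, (Submodule.Quotient.mk_eq_zero N).2 hp, zero_add,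
    Submodule.Quotient.mk_smul]
  exact Submodule.smul_mem_smul (Ideal.pow_mem_pow (Ideal.mem_span_singleton_self z) n) trivial

/-- The induction replaces `N` by its saturation and then by `N + z ^ a M` with `z` a nonzerodivisor
on `M ⧸ N`, and concludes with Krull's intersection theorem. -/
lemma mem_saturation_of_ringKrullDim_lt {n : ℕ} {b : M}
    (hN : ∀ j < n, ∃ k, maximalIdeal R ^ k ≤ cohomologyAnnihilator (maximalIdeal R) j N)
    (hb : ringKrullDim (R ⧸ N.colon {b}) < n) : b ∈ saturation (maximalIdeal R) N := by
  induction n generalizing N with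
  | zero => exact le_saturation _ _ (mem_of_ringKrullDim_quotient_colon_lt_zero hb)
  | succ n ih =>
    set K := saturation (maximalIdeal R) N
    have hNK : N ≤ K := le_saturation _ _
    have hK : saturation (maximalIdeal R) K ≤ K := saturation_saturation_le _ _
    replace hb := (ringKrullDim_quotient_anti (Submodule.colon_mono hNK le_rfl)).trans_lt hb
    replace hN (j : ℕ) (hj : j < n + 1) :
        ∃ k, maximalIdeal R ^ k ≤ cohomologyAnnihilator (maximalIdeal R) j K :=
      (hN j hj).imp fun k hk ↦ hk.trans (cohomologyAnnihilator_mono hNK le_rfl j)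
    obtain ⟨z, hz, hreg⟩ := exists_isSMulRegular_of_saturation_le hK
    have hcolon (a : ℕ) : colonElem K (z ^ a) ≤ saturation (maximalIdeal R) K := fun c hc ↦
      le_saturation _ _ (mem_of_isSMulRegular_quotient_of_smul_mem (hreg.pow a) hc)
    have hdim (a : ℕ) : ringKrullDim (R ⧸ (K ⊔ z ^ a • ⊤).colon {b}) < n := by
      have hlt := (ringKrullDim_quotient_colon_sup_succ_le (hreg.pow a) b).trans_lt hb
      rw [Nat.cast_add, Nat.cast_one] at hlt
      exact lt_of_add_lt_add_right hlt
    rcases n.eq_zero_or_pos with rfl | hn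
    · exact mem_of_forall_mem_sup_pow_smul hz fun a ↦
        mem_of_ringKrullDim_quotient_colon_lt_zero (hdim a)
    obtain ⟨k, hk⟩ := hN 1 (Nat.succ_lt_succ hn)
    refine hK ⟨k, fun s hs ↦ mem_of_forall_mem_sup_pow_smul hz fun a ↦ ?_⟩
    have hs₀ : s ∈ cohomologyAnnihilator (maximalIdeal R) 0 (K ⊔ z ^ a • ⊤) := by
      have h1 : (1 : R) ∈ cohomologyAnnihilator (maximalIdeal R) 0 K :=
        mem_cohomologyAnnihilator_zero.2 fun c hc ↦ (one_smul R c).symm ▸ hK hc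
      exact one_mul s ▸ cohomologyAnnihilator_mul_le (hcolon a) 0 (Ideal.mul_mem_mul h1 (hk hs))
    refine mem_cohomologyAnnihilator_zero.1 hs₀ b (ih (fun j hj ↦ ?_) (hdim a))
    obtain ⟨l, hl⟩ := hN j (by lia)
    obtain ⟨m, hm⟩ := hN (j + 1) (by lia)
    exact ⟨l + m, (pow_add _ _ _).trans_le
      ((Ideal.mul_mono hl hm).trans (cohomologyAnnihilator_mul_le (hcolon a) j))⟩

lemma colonElem_le_saturation {q : Ideal R} (hq : q.radical = maximalIdeal R) {n : ℕ} {y : R}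
    {L : List R} (hL : ∀ l ∈ L, l ∈ maximalIdeal R)
    (hrad : maximalIdeal R ≤ (N.colon Set.univ ⊔ Ideal.ofList (y :: L)).radical)
    (hN : ∀ j ≤ L.length, q ^ n ≤ cohomologyAnnihilator (maximalIdeal R) j N) :
    colonElem N y ≤ saturation (maximalIdeal R) N := by
  intro b hb
  obtain ⟨k, hk⟩ := Ideal.exists_pow_le_of_le_radical_of_fg hq.ge (IsNoetherian.noetherian _)
  have hle : N.colon Set.univ ⊔ Ideal.span {y} ≤ N.colon {b} :=
    sup_le (Submodule.colon_mono le_rfl (Set.subset_univ _))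
      ((Ideal.span_singleton_le_iff_mem _).2 (Submodule.mem_colon_singleton.2 hb))
  rw [Ideal.ofList_cons, ← sup_assoc] at hrad
  have hdim := ringKrullDim_quotient_le_length hL
    (hrad.trans (Ideal.radical_mono (sup_le_sup_right hle _)))
  exact mem_saturation_of_ringKrullDim_lt (n := L.length + 1)
    (fun j hj ↦ ⟨k * n, (pow_mul _ k n).trans_le
      ((Ideal.pow_right_mono hk n).trans (hN j (Nat.lt_succ_iff.1 hj)))⟩)
    (hdim.trans_lt (by exact_mod_cast L.length.lt_succ_self))

end SmallDimension

section OrderIndependence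

open CategoryTheory LocalCohomologyModule
open scoped Pointwise

section Noetherian

variable {R : Type u} [CommRing R] [IsNoetherianRing R] {M : Type u} [AddCommGroup M] [Module R M]
  [Module.Finite R M] {J : Ideal R} {j : ℕ} {N : Submodule R M} {x y : R}

lemma cohomologyAnnihilator_sup_le (hx : colonElem N x ≤ saturation J N)
    (hxN : x ∈ cohomologyAnnihilator J j N) :
    cohomologyAnnihilator J j (N ⊔ x • ⊤) ≤ cohomologyAnnihilator J j N := by
  refine fun r hr ↦ mem_cohomologyAnnihilator.2 fun ξ ↦ ?_
  obtain ⟨ζ, hζ⟩ := exists_smul_eq_of_map_quotProj_eq_zero hx (ξ := r • ξ) <| by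
    rw [map_smul, mem_cohomologyAnnihilator.1 hr]
  rw [← hζ, mem_cohomologyAnnihilator.1 hxN]

lemma cohomologyAnnihilator_sup_le_succ (hx : colonElem N x ≤ saturation J N)
    (hxN : x ∈ cohomologyAnnihilator J (j + 1) N) :
    cohomologyAnnihilator J j (N ⊔ x • ⊤) ≤ cohomologyAnnihilator J (j + 1) N :=
  fun _ hr ↦ mem_cohomologyAnnihilator.2 fun ξ ↦
    smul_eq_zero_of_mem_cohomologyAnnihilator_sup hx hr (mem_cohomologyAnnihilator.1 hxN ξ)

lemma mem_cohomologyAnnihilator_sup_swap (hNx : colonElem N x ≤ saturation J N)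
    (hNy : colonElem N y ≤ saturation J N)
    (hNxy : colonElem (N ⊔ x • ⊤) y ≤ saturation J (N ⊔ x • ⊤))
    (hx : x ∈ cohomologyAnnihilator J j N) (hx' : x ∈ cohomologyAnnihilator J (j + 1) N)
    (hy : y ∈ cohomologyAnnihilator J j (N ⊔ x • ⊤)) :
    x ∈ cohomologyAnnihilator J j (N ⊔ y • ⊤) := by
  refine mem_cohomologyAnnihilator.2 fun ξ ↦ ?_
  obtain ⟨ζ, hζ⟩ := exists_map_quotProj_eq_smul hNy hx' ξ
  suffices h : map J j (quotProj (le_sup_left : N ≤ N ⊔ x • ⊤)) ζ = 0 by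
    obtain ⟨η, rfl⟩ := exists_smul_eq_of_map_quotProj_eq_zero hNx h
    rw [← hζ, mem_cohomologyAnnihilator.1 hx, map_zero]
  have hyx : map J j (quotProj (le_sup_left.trans le_sup_left : N ≤ N ⊔ y • ⊤ ⊔ x • ⊤)) ζ = 0 := by
    rw [← map_quotProj_map_quotProj le_sup_left le_sup_left, hζ, map_smul]
    exact mem_cohomologyAnnihilator.1 (self_mem_cohomologyAnnihilator_sup J j _ x) _
  have hxy : map J j (quotProj (le_sup_left.trans le_sup_left : N ≤ N ⊔ x • ⊤ ⊔ y • ⊤)) ζ = 0 := by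
    rw [← map_quotProj_map_quotProj (le_sup_left.trans le_sup_left)
      (sup_right_comm N (y • ⊤) (x • ⊤)).le, hyx, map_zero]
  rw [← map_quotProj_map_quotProj le_sup_left le_sup_left] at hxy
  obtain ⟨η, hη⟩ := exists_smul_eq_of_map_quotProj_eq_zero hNxy hxy
  rw [← hη, mem_cohomologyAnnihilator.1 hy]

end Noetherian

variable {R : Type u} [CommRing R] {M : Type u} [AddCommGroup M] [Module R M]

lemma colon_univ_sup_ofList_cons_le (N : Submodule R M) (x : R) (L : List R) :
    N.colon Set.univ ⊔ Ideal.ofList (x :: L) ≤ (N ⊔ x • ⊤).colon Set.univ ⊔ Ideal.ofList L := by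
  rw [Ideal.ofList_cons, ← sup_assoc]
  refine sup_le_sup_right (sup_le (Submodule.colon_mono le_sup_left le_rfl) ?_) _
  exact (Ideal.span_singleton_le_iff_mem _).2 <| Submodule.mem_colon.2 fun a _ ↦
    Submodule.mem_sup_right (Submodule.smul_mem_pointwise_smul a x ⊤ trivial)

lemma ofList_eq_of_perm {L L' : List R} (h : L.Perm L') : Ideal.ofList L = Ideal.ofList L' :=
  congrArg Ideal.span (Set.ext fun _ ↦ h.mem_iff)

variable [IsLocalRing R]

/-- The sequence `L` is standard on `M ⧸ N` with respect to the ideal `q`: writing `n` for its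
length, `q` annihilates `H_𝔪^j(M ⧸ (N + (y₁, …, yᵢ) M))` for each initial segment `y₁, …, yᵢ` of `L`
and each `j` with `i + j < n`. -/
def IsStandardAlong (q : Ideal R) : Submodule R M → List R → Prop
  | _, [] => True
  | N, y :: L => (∀ j ≤ L.length, q ≤ cohomologyAnnihilator (maximalIdeal R) j N) ∧
      IsStandardAlong q (N ⊔ y • ⊤) L

lemma isStandardAlong_iff {q : Ideal R} {N : Submodule R M} {L : List R} :
    IsStandardAlong q N L ↔ ∀ i j, i + j < L.length →
      q ≤ cohomologyAnnihilator (maximalIdeal R) j (N ⊔ Ideal.ofList (L.take i) • ⊤) := by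
  induction L generalizing N with
  | nil => simp [IsStandardAlong]
  | cons y L ih =>
    have hcons (i : ℕ) : N ⊔ Ideal.ofList ((y :: L).take (i + 1)) • ⊤ =
        N ⊔ y • ⊤ ⊔ Ideal.ofList (L.take i) • ⊤ := by
      rw [List.take_succ_cons, Ideal.ofList_cons, Submodule.sup_smul,
        Submodule.ideal_span_singleton_smul, sup_assoc]
    have hnil : N ⊔ Ideal.ofList ((y :: L).take 0) • ⊤ = N := by
      rw [List.take_zero, Ideal.ofList_nil, Submodule.bot_smul, sup_bot_eq]
    rw [IsStandardAlong, ih, List.length_cons]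
    constructor
    · rintro ⟨h₀, h⟩ (_ | i) j hij
      · rw [hnil]
        exact h₀ j (by lia)
      · rw [hcons]
        exact h i j (by lia)
    · intro h
      refine ⟨fun j hj ↦ hnil ▸ h 0 j (by lia), fun i j hij ↦ hcons i ▸ h (i + 1) j (by lia)⟩

variable [IsNoetherianRing R] [Module.Finite R M] {q : Ideal R} {N : Submodule R M} {L : List R}

lemma IsStandardAlong.swap (hq : q.radical = maximalIdeal R) {x y : R}
    (hL : ∀ l ∈ x :: y :: L, l ∈ q) (hqN : q ≤ N.colon Set.univ ⊔ Ideal.ofList (x :: y :: L))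
    (h : IsStandardAlong q N (x :: y :: L)) : IsStandardAlong q N (y :: x :: L) := by
  obtain ⟨hN, hNx, hNxy⟩ := h
  have hx : x ∈ q := hL x (by simp)
  have hy : y ∈ q := hL y (by simp)
  have hm {L' : List R} (hsub : L' ⊆ x :: y :: L) : ∀ l ∈ L', l ∈ maximalIdeal R :=
    fun l hl ↦ hq ▸ Ideal.le_radical (hL l (hsub hl))
  have hrad {A : Ideal R} (hA : q ≤ A) : maximalIdeal R ≤ A.radical := hq ▸ Ideal.radical_mono hA
  have hqN' : q ≤ N.colon Set.univ ⊔ Ideal.ofList (y :: x :: L) :=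
    ofList_eq_of_perm (List.Perm.swap y x L) ▸ hqN
  have hcx := colonElem_le_saturation hq (hm (by simp)) (hrad hqN)
    fun j hj ↦ (pow_one q).trans_le (hN j hj)
  have hcy := colonElem_le_saturation hq (hm (by simp)) (hrad hqN')
    fun j hj ↦ (pow_one q).trans_le (hN j hj)
  have hcxy := colonElem_le_saturation hq (hm (by simp))
    (hrad (hqN.trans (colon_univ_sup_ofList_cons_le N x _)))
    fun j hj ↦ (pow_one q).trans_le (hNx j hj)
  have hcyx := colonElem_le_saturation hq (hm (by simp))
    (hrad (hqN'.trans (colon_univ_sup_ofList_cons_le N y _)))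
    fun j hj ↦ (sq q).trans_le <|
      (Ideal.mul_mono (hN j (Nat.le_succ_of_le hj)) (hN (j + 1) (Nat.succ_le_succ hj))).trans
        (cohomologyAnnihilator_mul_le hcy j)
  have hxy (j : ℕ) (hj : j ≤ L.length) :
      x ∈ cohomologyAnnihilator (maximalIdeal R) j (N ⊔ y • ⊤) :=
    mem_cohomologyAnnihilator_sup_swap hcx hcy hcxy (hN j (Nat.le_succ_of_le hj) hx)
      (hN (j + 1) (Nat.succ_le_succ hj) hx) (hNx j hj hy)
  rw [sup_right_comm] at hNxy
  refine ⟨hN, fun j hj ↦ ?_, hNxy⟩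
  cases L with
  | nil =>
    obtain rfl := Nat.le_zero.1 hj
    refine (hqN'.trans (colon_univ_sup_ofList_cons_le N y _)).trans
      (sup_le (colon_univ_le_cohomologyAnnihilator _ _ _) ?_)
    rw [Ideal.ofList_singleton, Ideal.span_singleton_le_iff_mem]
    exact hxy 0 le_rfl
  | cons l L =>
    rcases Nat.le_succ_iff.1 hj with hj' | rfl
    · exact (hNxy.1 j hj').trans (cohomologyAnnihilator_sup_le hcyx (hxy j hj))
    · exact (hNxy.1 _ le_rfl).trans (cohomologyAnnihilator_sup_le_succ hcyx (hxy _ hj))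

lemma IsStandardAlong.perm {L' : List R} (hq : q.radical = maximalIdeal R) (hLL' : L.Perm L')
    (hL : ∀ l ∈ L, l ∈ q) (hqN : q ≤ N.colon Set.univ ⊔ Ideal.ofList L)
    (h : IsStandardAlong q N L) : IsStandardAlong q N L' := by
  induction hLL' generalizing N with
  | nil => exact h
  | cons y p ih =>
    exact ⟨p.length_eq ▸ h.1, ih (fun l hl ↦ hL l (List.mem_cons_of_mem _ hl))
      (hqN.trans (colon_univ_sup_ofList_cons_le N y _)) h.2⟩
  | swap x y L => exact h.swap hq hL hqN
  | trans p₁ _ ih₁ ih₂ =>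
    exact ih₂ (fun l hl ↦ hL l (p₁.mem_iff.2 hl)) (ofList_eq_of_perm p₁ ▸ hqN) (ih₁ hL hqN h)

end OrderIndependence

section Families

open Finset
open scoped Pointwise

section PartialSubmodule

variable {R : Type u} [CommRing R] {M : Type u} [AddCommGroup M] [Module R M] {ι : Type*}
  {y y' : ι → R} {S : Finset ι} {i : ι}

/-- The submodule `y_S M` of `M` generated by the multiples of the elements `y i` with `i ∈ S`. -/
def partialSubmodule (M : Type u) [AddCommGroup M] [Module R M] (y : ι → R) (S : Finset ι) :
    Submodule R M :=
  Ideal.span (y '' S) • ⊤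

lemma partialSubmodule_insert [DecidableEq ι] (y : ι → R) (i : ι) (S : Finset ι) :
    partialSubmodule M y (insert i S) = partialSubmodule M y S ⊔ y i • ⊤ := by
  rw [partialSubmodule, coe_insert, Set.image_insert_eq, Ideal.span_insert, Submodule.sup_smul,
    Submodule.ideal_span_singleton_smul, sup_comm, partialSubmodule]

lemma partialSubmodule_update [DecidableEq ι] (y : ι → R) (hi : i ∉ S) (r : R) :
    partialSubmodule M (Function.update y i r) S = partialSubmodule M y S := by
  rw [partialSubmodule, partialSubmodule, Set.image_congr fun k hk ↦
    Function.update_of_ne (ne_of_mem_of_not_mem hk hi) _ _]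

lemma smul_mem_partialSubmodule (y : ι → R) (hi : i ∈ S) (b : M) :
    y i • b ∈ partialSubmodule M y S :=
  Submodule.smul_mem_smul (Ideal.subset_span (Set.mem_image_of_mem y hi)) trivial

lemma radical_span_range_eq_of_pow (h : ∀ i, ∃ n, y' i = y i ^ (n + 1)) :
    (Ideal.span (Set.range y')).radical = (Ideal.span (Set.range y)).radical := by
  refine le_antisymm (Ideal.radical_mono ?_) (Ideal.radical_le_radical_iff.2 ?_) <;>
    refine Ideal.span_le.2 (Set.range_subset_iff.2 fun i ↦ ?_) <;> obtain ⟨n, hn⟩ := h i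
  · exact hn ▸ Ideal.pow_mem_of_mem _ (Ideal.subset_span (Set.mem_range_self i)) _ n.succ_pos
  · exact ⟨n + 1, hn ▸ Ideal.subset_span (Set.mem_range_self i)⟩

lemma radical_span_range_update_pow [DecidableEq ι] (y : ι → R) (i : ι) (n : ℕ) :
    (Ideal.span (Set.range (Function.update y i (y i ^ (n + 1))))).radical =
      (Ideal.span (Set.range y)).radical := by
  refine radical_span_range_eq_of_pow fun k ↦ ?_
  rcases eq_or_ne k i with rfl | hk
  · exact ⟨n, Function.update_self ..⟩
  · exact ⟨0, by rw [Function.update_of_ne hk, zero_add, pow_one]⟩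

end PartialSubmodule

variable {R : Type u} [CommRing R] [IsLocalRing R] {M : Type u} [AddCommGroup M] [Module R M]
  {ι : Type*} [Fintype ι] {q : Ideal R} {y : ι → R} {S : Finset ι} {i k : ι}

/-- The finite family `y` is standard on `M` with respect to the ideal `q`: `q` annihilates
`H_𝔪^j(M ⧸ y_S M)` for every `S` and every `j` with `j + #S` smaller than the size of the family.
Unlike the condition on initial segments, this one does not refer to an order on the index set. -/
def IsStandardFamily (M : Type u) [AddCommGroup M] [Module R M] (q : Ideal R) (y : ι → R) : Prop :=
  ∀ (S : Finset ι) (j : ℕ), j + #S < Fintype.card ι →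
    q ≤ cohomologyAnnihilator (maximalIdeal R) j (partialSubmodule M y S)

variable [IsNoetherianRing R] [Module.Finite R M]

lemma IsStandardAlong.isStandardFamily {L : List ι} (hL : L.Nodup) (hL' : ∀ i, i ∈ L)
    (hq : (Ideal.span (Set.range y)).radical = maximalIdeal R)
    (h : IsStandardAlong (Ideal.span (Set.range y)) (⊥ : Submodule R M) (L.map y)) :
    IsStandardFamily M (Ideal.span (Set.range y)) y := by
  classical
  intro S j hj
  have hcard : L.length = Fintype.card ι := by
    rw [← List.toFinset_card_of_nodup hL, eq_univ_of_forall fun i ↦ List.mem_toFinset.2 (hL' i),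
      card_univ]
  have hperm : L.Perm (S.toList ++ Sᶜ.toList) := by
    refine (List.perm_ext_iff_of_nodup hL ?_).2 fun i ↦ ?_
    · exact List.nodup_append'.2 ⟨S.nodup_toList, Sᶜ.nodup_toList, fun i hi hi' ↦
        mem_compl.1 (mem_toList.1 hi') (mem_toList.1 hi)⟩
    · simpa [hL' i] using em (i ∈ S)
  have hrange : Ideal.ofList (L.map y) = Ideal.span (Set.range y) :=
    congrArg Ideal.span (Set.ext fun r ↦ by simp [hL'])
  have hmem : ∀ l ∈ L.map y, l ∈ Ideal.span (Set.range y) := by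
    rw [← hrange]
    exact fun l hl ↦ Ideal.subset_span hl
  have htake : (⊥ : Submodule R M) ⊔
      Ideal.ofList (((S.toList ++ Sᶜ.toList).map y).take #S) • ⊤ = partialSubmodule M y S := by
    rw [bot_sup_eq, ← List.map_take, ← S.length_toList, List.take_left]
    exact congrArg (Ideal.span · • ⊤) (Set.ext fun r ↦ by simp)
  rw [← htake]
  refine isStandardAlong_iff.1
    (h.perm hq (hperm.map y) hmem (hrange ▸ le_sup_right)) _ j ?_
  rwa [← (hperm.map y).length_eq, List.length_map, hcard, add_comm]

lemma colonElem_partialSubmodule_le_saturation (hq : q.radical = maximalIdeal R)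
    (hy : (Ideal.span (Set.range y)).radical = maximalIdeal R) (hi : i ∉ S)
    (hS : ∀ j, j + #S < Fintype.card ι →
      q ≤ cohomologyAnnihilator (maximalIdeal R) j (partialSubmodule M y S)) :
    colonElem (partialSubmodule M y S) (y i) ≤
      saturation (maximalIdeal R) (partialSubmodule M y S) := by
  classical
  set L := ((insert i S)ᶜ.toList.map y) with hL
  have hlen : L.length + 1 + #S = Fintype.card ι := by
    rw [hL, List.length_map, length_toList, ← card_compl_add_card (insert i S),
      card_insert_of_notMem hi]
    lia
  have hmem (k : ι) : y k ∈
      (partialSubmodule M y S).colon Set.univ ⊔ Ideal.ofList (y i :: L) := by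
    by_cases hk : k ∈ S
    · exact Ideal.mem_sup_left
        (Submodule.mem_colon.2 fun b _ ↦ smul_mem_partialSubmodule y hk b)
    · refine Ideal.mem_sup_right (Ideal.subset_span ?_)
      rcases eq_or_ne k i with rfl | hki
      · exact List.mem_cons_self
      · exact List.mem_cons_of_mem _ (List.mem_map_of_mem (by simp [hk, hki]))
  refine colonElem_le_saturation hq (n := 1) (L := L) (fun l hl ↦ ?_) ?_ fun j hj ↦ ?_
  · obtain ⟨k, -, rfl⟩ := List.mem_map.1 hl
    exact hy ▸ Ideal.le_radical (Ideal.subset_span (Set.mem_range_self k))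
  · exact hy ▸ Ideal.radical_mono (Ideal.span_le.2 (Set.range_subset_iff.2 hmem))
  · exact (pow_one q).trans_le (hS j (by lia))

namespace IsStandardFamily

lemma update_pow [DecidableEq ι] (h : IsStandardFamily M q y) (hq : q.radical = maximalIdeal R)
    (hy : (Ideal.span (Set.range y)).radical = maximalIdeal R) (hi : y i ∈ q) (n : ℕ) :
    IsStandardFamily M q (Function.update y i (y i ^ (n + 1))) := by
  intro S j hj
  by_cases hiS : i ∈ S
  · have hiT : i ∉ S.erase i := notMem_erase i S
    have hcard := card_erase_add_one hiS
    have hcolon := colonElem_partialSubmodule_le_saturation (M := M) hq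
      ((radical_span_range_update_pow y i n).trans hy) hiT fun l hl ↦
        (partialSubmodule_update (M := M) y hiT _).symm ▸ h _ l hl
    rw [partialSubmodule_update y hiT, Function.update_self] at hcolon
    have hS := h S j hj
    rw [← insert_erase hiS, partialSubmodule_insert] at hS ⊢
    rw [partialSubmodule_update y hiT, Function.update_self]
    exact fun r hr ↦ mem_cohomologyAnnihilator_sup_pow hcolon (h _ (j + 1) (by lia) hi)
      (h _ j (by lia) hr) (hS hr)
  · rw [partialSubmodule_update y hiS]
    exact h S j hj

lemma pow (h : IsStandardFamily M q y) (hq : q.radical = maximalIdeal R)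
    (hy : (Ideal.span (Set.range y)).radical = maximalIdeal R) (hyq : ∀ k, y k ∈ q) {m : ι → ℕ}
    (hm : ∀ k, 1 ≤ m k) : IsStandardFamily M q (fun k ↦ y k ^ m k) := by
  classical
  suffices hT : ∀ T : Finset ι, IsStandardFamily M q (T.piecewise (fun k ↦ y k ^ m k) y) by
    simpa only [piecewise_univ] using hT univ
  intro T
  induction T using Finset.induction_on with
  | empty => rwa [piecewise_empty]
  | insert i T hi ih =>
    have hi' : T.piecewise (fun k ↦ y k ^ m k) y i = y i := piecewise_eq_of_notMem _ _ _ hi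
    have hrad : (Ideal.span (Set.range (T.piecewise (fun k ↦ y k ^ m k) y))).radical =
        maximalIdeal R := by
      refine (radical_span_range_eq_of_pow fun k ↦ ?_).trans hy
      by_cases hk : k ∈ T
      · exact ⟨m k - 1, by rw [piecewise_eq_of_mem _ _ _ hk, Nat.sub_add_cancel (hm k)]⟩
      · exact ⟨0, by rw [piecewise_eq_of_notMem _ _ _ hk, zero_add, pow_one]⟩
    have hupdate := ih.update_pow hq hrad (hi'.symm ▸ hyq i) (m i - 1)
    rwa [hi', Nat.sub_add_cancel (hm i), ← piecewise_insert] at hupdate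

lemma smul_mem_of_smul_smul_mem (h : IsStandardFamily M q y) (hq : q.radical = maximalIdeal R)
    (hy : (Ideal.span (Set.range y)).radical = maximalIdeal R) (hi : i ∉ S) (hk : k ∉ S)
    (hkq : y k ∈ q) {b : M} (hb : y i • y k • b ∈ partialSubmodule M y S) :
    y k • b ∈ partialSubmodule M y S := by
  have hcolon {l : ι} (hl : l ∉ S) := colonElem_partialSubmodule_le_saturation hq hy hl (h S)
  obtain ⟨n, hn⟩ := hcolon hi hb
  have hsat : b ∈ saturation (maximalIdeal R) (partialSubmodule M y S) :=
    saturation_saturation_le _ _ ⟨n, fun s hs ↦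
      hcolon hk (mem_colonElem.2 (smul_comm (y k) s b ▸ hn s hs))⟩
  have hcard : 0 + #S < Fintype.card ι :=
    (zero_add _).trans_lt (card_lt_univ_of_notMem hk)
  exact mem_cohomologyAnnihilator_zero.1 (h S 0 hcard hkq) b hsat

end IsStandardFamily

end Families

section UnconditionedDSequences

open Finset LocalCohomologyModule
open scoped Pointwise

variable {R : Type u} [CommRing R] {M : Type u} [AddCommGroup M] [Module R M]
  {ι : Type*} {x y : ι → R} {S : Finset ι} {i k : ι}

/-- Every arrangement of the family `y` is a d-sequence on `M`. Only the set `S` of indices that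
come before `i` and `k` matters, so no order on the index set is needed. -/
def IsUnconditionedDSequence (M : Type u) [AddCommGroup M] [Module R M] (y : ι → R) : Prop :=
  ∀ (S : Finset ι), ∀ i ∉ S, ∀ k ∉ S, ∀ b : M,
    y i • y k • b ∈ partialSubmodule M y S → y k • b ∈ partialSubmodule M y S

/-- The family `x` is an unconditioned strong d-sequence on `M`. -/
def IsUSDFamily (M : Type u) [AddCommGroup M] [Module R M] (x : ι → R) : Prop :=
  ∀ m : ι → ℕ, (∀ i, 1 ≤ m i) → IsUnconditionedDSequence M (fun i ↦ x i ^ m i)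

lemma IsUSDFamily.isUnconditionedDSequence (h : IsUSDFamily M x) :
    IsUnconditionedDSequence M x := by
  simpa only [pow_one] using h (fun _ ↦ 1) fun _ ↦ le_rfl

lemma IsUSDFamily.update_pow [DecidableEq ι] (h : IsUSDFamily M x) (i : ι) (n : ℕ) :
    IsUSDFamily M (Function.update x i (x i ^ (n + 1))) := by
  intro m hm
  have hpow : (fun k ↦ Function.update x i (x i ^ (n + 1)) k ^ m k) =
      fun k ↦ x k ^ Function.update m i ((n + 1) * m i) k := by
    ext k
    rcases eq_or_ne k i with rfl | hk
    · rw [Function.update_self, Function.update_self, pow_mul]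
    · rw [Function.update_of_ne hk, Function.update_of_ne hk]
  rw [hpow]
  refine h _ fun k ↦ ?_
  rcases eq_or_ne k i with rfl | hk
  · rw [Function.update_self]
    exact Nat.mul_pos n.succ_pos (hm k)
  · rw [Function.update_of_ne hk]
    exact hm k

namespace IsUnconditionedDSequence

lemma smul_mem_of_pow_smul_mem (h : IsUnconditionedDSequence M y) (hk : k ∉ S) {b : M} {n : ℕ}
    (hb : y k ^ (n + 1) • b ∈ partialSubmodule M y S) : y k • b ∈ partialSubmodule M y S := by
  induction n with
  | zero => rwa [zero_add, pow_one] at hb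
  | succ n ih =>
    rw [pow_succ', pow_succ', mul_smul, mul_smul] at hb
    refine ih ?_
    rw [pow_succ', mul_smul]
    exact h S k hk k hk _ hb

lemma colonElem_le_saturation [IsNoetherianRing R] {J : Ideal R} (h : IsUnconditionedDSequence M y)
    (hi : i ∉ S) (hJ : J ≤ (Ideal.span (Set.range y)).radical) :
    colonElem (partialSubmodule M y S) (y i) ≤ saturation J (partialSubmodule M y S) := by
  intro b hb
  obtain ⟨n, hn⟩ := Ideal.exists_pow_le_of_le_radical_of_fg hJ (IsNoetherian.noetherian J)
  suffices hle : Ideal.span (Set.range y) ≤ (partialSubmodule M y S).colon {b} from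
    ⟨n, fun s hs ↦ Submodule.mem_colon_singleton.1 (hle (hn hs))⟩
  refine Ideal.span_le.2 (Set.range_subset_iff.2 fun k ↦ Submodule.mem_colon_singleton.2 ?_)
  by_cases hk : k ∈ S
  · exact smul_mem_partialSubmodule y hk b
  · exact h S i hi k hk b (smul_comm (y k) (y i) b ▸ (partialSubmodule M y S).smul_mem (y k) hb)

end IsUnconditionedDSequence

variable [IsLocalRing R] [IsNoetherianRing R] [Module.Finite R M] [Fintype ι]

lemma IsUSDFamily.apply_mem_cohomologyAnnihilator (h : IsUSDFamily M x)
    (hx : (Ideal.span (Set.range x)).radical = maximalIdeal R) {j : ℕ}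
    (hj : j + #S < Fintype.card ι) (k : ι) :
    x k ∈ cohomologyAnnihilator (maximalIdeal R) j (partialSubmodule M x S) := by
  classical
  by_cases hk : k ∈ S
  · exact colon_univ_le_cohomologyAnnihilator _ _ _ <|
      Submodule.mem_colon.2 fun b _ ↦ smul_mem_partialSubmodule x hk b
  have hmem (k : ι) : x k ∈ maximalIdeal R :=
    hx ▸ Ideal.le_radical (Ideal.subset_span (Set.mem_range_self k))
  induction j generalizing S x with
  | zero =>
    refine mem_cohomologyAnnihilator_zero.2 fun b ⟨n, hn⟩ ↦ ?_
    exact h.isUnconditionedDSequence.smul_mem_of_pow_smul_mem hk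
      (hn _ (Ideal.pow_le_pow_right n.le_succ (Ideal.pow_mem_pow (hmem k) _)))
  | succ j ih =>
    obtain ⟨i, hi⟩ : ∃ i, i ∉ insert k S := by
      by_contra! hall
      have hcard := card_insert_of_notMem hk
      rw [eq_univ_of_forall hall, card_univ] at hcard
      lia
    rw [mem_insert, not_or] at hi
    obtain ⟨hik, hiS⟩ := hi
    refine mem_cohomologyAnnihilator.2 fun ξ ↦ ?_
    obtain ⟨n, hn⟩ := exists_pow_smul_eq_zero ξ
    have hξ : x i ^ (n + 1) • ξ = 0 :=
      hn _ (Ideal.pow_le_pow_right n.le_succ (Ideal.pow_mem_pow (hmem i) _))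
    have h' := h.update_pow i n
    have hx' := (radical_span_range_update_pow x i n).trans hx
    have hcolon := h'.isUnconditionedDSequence.colonElem_le_saturation hiS hx'.ge
    have hk' := ih h' hx' (S := insert i S) (by rw [card_insert_of_notMem hiS]; lia)
      (by simp [Ne.symm hik, hk]) fun l ↦
        hx' ▸ Ideal.le_radical (Ideal.subset_span (Set.mem_range_self l))
    rw [partialSubmodule_update x hiS, Function.update_self] at hcolon
    rw [partialSubmodule_insert, partialSubmodule_update x hiS, Function.update_self,
      Function.update_of_ne (Ne.symm hik)] at hk'
    exact smul_eq_zero_of_mem_cohomologyAnnihilator_sup hcolon hk' hξ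

theorem isStandardFamily_iff_isUSDFamily
    (hx : (Ideal.span (Set.range x)).radical = maximalIdeal R) :
    IsStandardFamily M (Ideal.span (Set.range x)) x ↔ IsUSDFamily M x := by
  constructor
  · intro h m hm S i hi k hk b hb
    have hpow : (Ideal.span (Set.range fun i ↦ x i ^ m i)).radical = maximalIdeal R :=
      (radical_span_range_eq_of_pow fun k ↦ ⟨m k - 1, by rw [Nat.sub_add_cancel (hm k)]⟩).trans hx
    have hmem (k : ι) : x k ∈ Ideal.span (Set.range x) := Ideal.subset_span (Set.mem_range_self k)
    exact (h.pow hx hx hmem hm).smul_mem_of_smul_smul_mem hx hpow hi hk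
      (Ideal.pow_mem_of_mem _ (hmem k) _ (hm k)) hb
  · exact fun h S j hj ↦ Ideal.span_le.2 <| Set.range_subset_iff.2 fun k ↦
      h.apply_mem_cohomologyAnnihilator hx hj k

end UnconditionedDSequences

section SystemsOfParameters

open Finset

variable {R : Type u} [CommRing R]

lemma partialSubmodule_self {ι : Type*} (y : ι → R) (S : Finset ι) :
    partialSubmodule R y S = Ideal.span (y '' S) := by
  rw [partialSubmodule, smul_eq_mul, Ideal.mul_top]

section DSequences

variable {n : ℕ} {y x : Fin n → R}

lemma isDSequence_comp_iff (y : Fin n → R) (σ : Equiv.Perm (Fin n)) :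
    IsDSequence (fun j ↦ y (σ j)) ↔ ∀ i k : Fin n, i ≤ k → ∀ b : R,
      y (σ i) • y (σ k) • b ∈ partialSubmodule R y ((Iio i).map σ.toEmbedding) →
        y (σ k) • b ∈ partialSubmodule R y ((Iio i).map σ.toEmbedding) := by
  have himage (i : Fin n) : (fun j ↦ y (σ j)) '' {j | (j : ℕ) < (i : ℕ)} =
      y '' ((Iio i).map σ.toEmbedding) := by
    rw [coe_map, Set.image_image]
    exact congrArg _ (Set.ext fun j ↦ by simp)
  rw [IsDSequence, Fin.forall_iff]
  refine forall₃_congr fun i hi k ↦ forall_congr' fun hik ↦ ?_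
  rw [himage ⟨i, hi⟩, ← partialSubmodule_self]
  rw [SetLike.ext_iff]
  refine forall_congr' fun b ↦ ?_
  rw [Ideal.mem_colon_span_singleton, Ideal.mem_colon_span_singleton, mul_comm b, mul_comm b,
    mul_assoc]
  exact ⟨Iff.mp, fun h ↦ ⟨h, Ideal.mul_mem_left _ _⟩⟩

lemma exists_perm_map_Iio_eq (S : Finset (Fin n)) {i : Fin n} (hi : i ∉ S) :
    ∃ (σ : Equiv.Perm (Fin n)) (l : Fin n), (Iio l).map σ.toEmbedding = S ∧ σ l = i := by
  obtain ⟨l, hl⟩ : ∃ l : Fin n, (l : ℕ) = #S :=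
    ⟨⟨#S, (card_lt_univ_of_notMem hi).trans_eq (Fintype.card_fin n)⟩, rfl⟩
  obtain ⟨σ, rfl⟩ := Equiv.Perm.exists_map_finset_eq (Iio l) S ((Fin.card_Iio l).trans hl)
  have hσl : σ l ∉ (Iio l).map σ.toEmbedding := by simp
  refine ⟨σ.trans (Equiv.swap (σ l) i), l, ?_, Equiv.swap_apply_left _ _⟩
  ext k
  rw [mem_map_equiv, Equiv.symm_trans_apply, Equiv.symm_swap, ← mem_map_equiv, Equiv.swap_apply_def]
  split_ifs with hkl hki
  · rw [hkl, iff_false_right hσl]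
    exact hi
  · rw [hki, iff_false_right hi]
    exact hσl
  · rfl

lemma forall_isDSequence_comp_iff :
    (∀ σ : Equiv.Perm (Fin n), IsDSequence (fun j ↦ y (σ j))) ↔ IsUnconditionedDSequence R y := by
  simp only [isDSequence_comp_iff]
  constructor
  · intro h S i hi k hk b hb
    obtain ⟨σ, l, rfl, rfl⟩ := exists_perm_map_Iio_eq S hi
    have hlk : l ≤ σ.symm k := by
      by_contra! hlt
      exact hk (mem_map.2 ⟨σ.symm k, mem_Iio.2 hlt, σ.apply_symm_apply k⟩)
    rw [← σ.apply_symm_apply k] at hb ⊢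
    exact h σ l _ hlk b hb
  · intro h σ i k hik b hb
    exact h _ (σ i) (by simp) (σ k) (by simpa using hik) b hb

lemma isUSDSequence_iff_isUSDFamily : IsUSDSequence x ↔ IsUSDFamily R x :=
  forall₂_congr fun m _ ↦ forall_isDSequence_comp_iff (y := fun i ↦ x i ^ m i)

end DSequences

variable [IsLocalRing R] {d : ℕ} {x : Fin d → R}

lemma isStandardSOP_iff : IsStandardSOP x ↔ ∀ i j, i + j < d → Ideal.span (Set.range x) ≤
    cohomologyAnnihilator (maximalIdeal R) j
      (partialSubmodule R x (univ.filter fun k : Fin d ↦ (k : ℕ) < i)) := by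
  have hann (i j : ℕ) : (Ideal.span (Set.range x) ≤ cohomologyAnnihilator (maximalIdeal R) j
      (partialSubmodule R x (univ.filter fun k : Fin d ↦ (k : ℕ) < i))) ↔
        ∀ r ∈ Ideal.span (Set.range x), ∀ m : ((localCohomology (maximalIdeal R) j).obj
          (ModuleCat.of R (R ⧸ Ideal.span (x '' {k : Fin d | (k : ℕ) < i})))), r • m = 0 := by
    rw [cohomologyAnnihilator, (localCohomologyEquiv _ _ _).annihilator_eq, partialSubmodule_self,
      coe_filter_univ]
    exact forall₂_congr fun r _ ↦ Module.mem_annihilator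
  simp only [hann]
  constructor
  · exact fun h i j hij ↦ h (i + 1) j i.succ_pos (by lia)
  · exact fun h i j hi hij ↦ h (i - 1) j (by lia)

lemma isStandardSOP_iff_isStandardAlong : IsStandardSOP x ↔
    IsStandardAlong (Ideal.span (Set.range x)) (⊥ : Ideal R) ((List.finRange d).map x) := by
  rw [isStandardSOP_iff, isStandardAlong_iff, List.length_map, List.length_finRange]
  have htake (i : ℕ) : (⊥ : Ideal R) ⊔ Ideal.ofList (((List.finRange d).map x).take i) • ⊤ =
      partialSubmodule R x (univ.filter fun k : Fin d ↦ (k : ℕ) < i) := by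
    rw [bot_sup_eq, smul_eq_mul, Ideal.mul_top, partialSubmodule_self]
    refine congrArg Ideal.span (Set.ext fun r ↦ ?_)
    simpa [List.mem_take_iff_getElem, Fin.exists_iff] using
      ⟨fun ⟨k, hk, h⟩ ↦ ⟨k, hk.1, hk.2, h⟩, fun ⟨k, hki, hkd, h⟩ ↦ ⟨k, ⟨hki, hkd⟩, h⟩⟩
  simp only [htake]

lemma isStandardSOP_iff_isStandardFamily [IsNoetherianRing R]
    (hx : (Ideal.span (Set.range x)).radical = maximalIdeal R) :
    IsStandardSOP x ↔ IsStandardFamily R (Ideal.span (Set.range x)) x := by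
  constructor
  · intro h
    exact (isStandardSOP_iff_isStandardAlong.1 h).isStandardFamily (List.nodup_finRange d)
      List.mem_finRange hx
  · intro h
    refine isStandardSOP_iff.2 fun i j hij ↦ h _ j ?_
    rw [Fintype.card_fin, Fin.card_filter_val_lt]
    lia

end SystemsOfParameters

theorem stmt7_general {R : Type u} [CommRing R] [IsLocalRing R] [IsNoetherianRing R] {d : ℕ}
    (x : Fin d → R) (hsop : (Ideal.span (Set.range x)).radical = maximalIdeal R) :
    IsStandardSOP x ↔ IsUSDSequence x := by
  rw [isStandardSOP_iff_isStandardFamily hsop, isStandardFamily_iff_isUSDFamily hsop,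
    isUSDSequence_iff_isUSDFamily]

/-- a system of parameters of a Noetherian local ring is standard iff it is an
unconditioned strong d-sequence. -/
theorem stmt7 {R : Type u} [CommRing R] [IsLocalRing R] [IsNoetherianRing R]
    (d : ℕ) (hd : ringKrullDim R = d) (x : Fin d → R)
    (hsop : (Ideal.span (Set.range x)).radical = maximalIdeal R) :
    IsStandardSOP x ↔ IsUSDSequence x :=
  stmt7_general x hsop
end

section
/- Let (R,m) be a generalized Cohen–Macaulay Noetherian local ring, i.e., H_m^i(R) has finite length for all i < dim R. Then there exists t ∈ ℕ such that every system of parameters contained in m^t is an unconditioned strong d-sequence. In particular, for any system of parameters x_1,...,x_d, the powers x_1^n,...,x_d^n form a USD-sequence for all n ≫ 0. -/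
universe u

open IsLocalRing

/-!
For a finite module `M` let `A_n(M)` be the common annihilator of the local cohomology modules
`H^i(M)` with `i < n`. If `A_{n+1}(M)` kills the kernel of an endomorphism `f` of `M`, then the long
exact sequences attached to `0 → ker f → M → f M → 0` and `0 → f M → M → M/f M → 0` give
`A_{n+1}(M)^3 ⊆ A_n(M/f M)`. Dividing by the powers of a filter-regular element and applying Krull's
intersection theorem, it follows by induction on `n` that an `𝔪`-primary `A_n(M)` kills every
`z ∈ M` with `dim R z < n`: first a power of `A_n(M)` kills `z`, so `z` lies in `H^0(M)`, which is
killed by `A_n(M)` itself. The long exact sequences are used for `Ext^i(R/I^s, -)` at the stages of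
the colimit `H^i = colim Ext^i(R/I^s, -)`.

Now let `y_1, …, y_d` be a system of parameters and put `I = (y_1, …, y_i)`. An element of `R/I`
killed by a power of some `y_k` with `k > i` generates a module of dimension less than `d - i`, so
inductively it is killed by `A_{d-i}(R/I)`, which contains `A_d(R)^{3^i}`. If all the `y_j` lie in
`A_d(R)^{3^d}`, then `a y_{i+1} y_k ∈ I` implies first `a y_k^2 ∈ I` and then `a y_k ∈ I`.
-/

open CategoryTheory Limits Opposite Abelian

section ExtComparison

universe v w
variable {R : Type u} [Ring R] {C : Type v} [Category.{u} C] [Abelian C] [Linear R C]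
  {X X' Y : C}

/-- The map of cochain complexes `Hom(L, Y) ⟶ Hom(K, Y)` induced by a chain map `φ : K ⟶ L`. -/
noncomputable def linearYonedaObjMap (R : Type u) [Ring R] [Linear R C] {K L : ChainComplex C ℕ}
    (φ : K ⟶ L) (Y : C) :
    L.linearYonedaObj R Y ⟶ K.linearYonedaObj R Y :=
  (HomologicalComplex.unopFunctor _ _).map
    ((((linearYoneda R C).obj Y).rightOp.mapHomologicalComplex _).map φ).op

lemma isoExt_naturality [EnoughProjectives C] {P : ProjectiveResolution X}
    {P' : ProjectiveResolution X'} {g : X' ⟶ X} (φ : ProjectiveResolution.Hom P' P g) (n : ℕ)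
    (Y : C) :
    ((Ext R C n).map g.op).app Y ≫ (P'.isoExt n Y).hom =
      (P.isoExt n Y).hom ≫
        HomologicalComplex.homologyMap (linearYonedaObjMap R φ.hom Y) n := by
  have hcomm : φ.hom.f 0 ≫ P.π.f 0 = P'.π.f 0 ≫ g :=
    φ.hom_f_zero_comp_π_f_zero.trans (by simp only [ChainComplex.single₀_map_f_zero]; rfl)
  let F := ((linearYoneda R C).obj Y).rightOp
  have hDerived := ProjectiveResolution.isoLeftDerivedObj_inv_naturality g P' P φ.hom hcomm F n
  have hOp := (HomologicalComplex.homologyOpNatIso (ModuleCat R) (.up ℕ) n).inv.naturality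
    (linearYonedaObjMap R φ.hom Y).op
  have h := (congrArg (((P'.complex.linearYonedaObj R Y).homologyOp n).inv ≫ ·) hDerived).trans
    ((Category.assoc _ _ _).symm.trans
      (congrArg (· ≫ (P.isoLeftDerivedObj F n).inv) hOp.symm))
  exact congrArg Quiver.Hom.unop ((Category.assoc _ _ _).trans (h.trans (Category.assoc _ _ _)))

lemma d_comp_iCycles (P : ProjectiveResolution X) (n : ℕ)
    (z : (P.complex.linearYonedaObj R Y).cycles n) :
    P.complex.d (n + 1) n ≫ ((P.complex.linearYonedaObj R Y).iCycles n).hom z = 0 :=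
  LinearMap.congr_fun (congrArg ModuleCat.Hom.hom
    ((P.complex.linearYonedaObj R Y).iCycles_d n (n + 1))) z

variable [HasExt.{w} C]

lemma smul_extMk (P : ProjectiveResolution X) {n : ℕ} (a : R) (f : P.complex.X n ⟶ Y)
    (m : ℕ) (hm : n + 1 = m) (hf : P.complex.d m n ≫ f = 0) :
    a • P.extMk f m hm hf = P.extMk (a • f) m hm (by simp [hf]) := by
  simp only [Ext.smul_eq_comp_mk₀, P.extMk_comp_mk₀, Linear.comp_smul, Category.comp_id]

/-- The linear map sending a cocycle of `Hom(P, Y)`, for a projective resolution `P` of `X`, to the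
class it represents in `Ext X Y n`. -/
noncomputable def cyclesToExt (P : ProjectiveResolution X) (n : ℕ) (Y : C) :
    (P.complex.linearYonedaObj R Y).cycles n →ₗ[R] Abelian.Ext X Y n where
  toFun z := P.extMk (((P.complex.linearYonedaObj R Y).iCycles n).hom z) (n + 1) rfl
    (d_comp_iCycles P n z)
  map_add' z z' := by
    simp only [map_add]
    exact (P.add_extMk _ _ _ rfl (d_comp_iCycles P n z) (d_comp_iCycles P n z')).symm
  map_smul' a z := by
    simp only [map_smul]
    exact (smul_extMk P a _ _ rfl (d_comp_iCycles P n z)).symm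

lemma cyclesToExt_surjective (P : ProjectiveResolution X) (n : ℕ) (Y : C) :
    Function.Surjective (cyclesToExt (R := R) P n Y) := by
  intro e
  obtain ⟨f, hf, rfl⟩ := P.extMk_surjective e (n + 1) rfl
  refine ⟨(P.complex.linearYonedaObj R Y).cyclesMk f (n + 1) (by simp) hf, ?_⟩
  have hf' : ((P.complex.linearYonedaObj R Y).iCycles n).hom
    ((P.complex.linearYonedaObj R Y).cyclesMk f (n + 1) (by simp) hf) = f :=
    (P.complex.linearYonedaObj R Y).i_cyclesMk ..
  simp only [cyclesToExt, LinearMap.coe_mk, AddHom.coe_mk, hf']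

lemma extMk_eq_zero_iff_eq_zero (P : ProjectiveResolution X) (f : P.complex.X 0 ⟶ Y)
    (hf : P.complex.d 1 0 ≫ f = 0) : P.extMk f 1 rfl hf = 0 ↔ f = 0 := by
  refine ⟨fun h => ?_, fun h => by simp [h]⟩
  have hzero : P.cochainComplex.d (-(0 : ℕ)) 1 = 0 :=
    (P.cochainComplex.isZero_of_isStrictlyLE 0 1).eq_of_tgt _ _
  rw [← P.extEquivCohomologyClass.apply_eq_iff_eq, P.extEquivCohomologyClass_extMk,
    P.extEquivCohomologyClass_zero, CochainComplex.HomComplex.CohomologyClass.mk_eq_zero_iff,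
    CochainComplex.HomComplex.Cocycle.toSingleMk_mem_coboundaries_iff _ _ _ _ _ 1 (by simp)] at h
  obtain ⟨g, hg⟩ := h
  rwa [hzero, zero_comp, eq_comm, Preadditive.IsIso.comp_left_eq_zero] at hg

lemma homologyπ_hom_eq_zero_iff {ι : Type*} {c : ComplexShape ι}
    (K : HomologicalComplex (ModuleCat R) c) (i : ι) (z : K.cycles i) :
    (K.homologyπ i).hom z = 0 ↔ ∃ x, (K.d (c.prev i) i).hom x = (K.iCycles i).hom z := by
  have hexact := ShortComplex.exact_of_g_is_cokernel
    (ShortComplex.mk _ _ (K.toCycles_comp_homologyπ (c.prev i) i)) (K.homologyIsCokernel _ i rfl)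
  have hinj := (ModuleCat.mono_iff_injective (K.iCycles i)).1 inferInstance
  rw [← LinearMap.mem_ker, ← hexact.moduleCat_range_eq_ker]
  simp only [LinearMap.mem_range, ← K.toCycles_i, ModuleCat.hom_comp, LinearMap.comp_apply]
  exact exists_congr fun x => hinj.eq_iff.symm

lemma ker_cyclesToExt (P : ProjectiveResolution X) (n : ℕ) (Y : C) :
    LinearMap.ker (cyclesToExt (R := R) P n Y) =
      LinearMap.ker ((P.complex.linearYonedaObj R Y).homologyπ n).hom := by
  ext z
  rw [LinearMap.mem_ker, LinearMap.mem_ker, homologyπ_hom_eq_zero_iff]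
  obtain _ | p := n
  · refine (extMk_eq_zero_iff_eq_zero P _ (d_comp_iCycles P _ z)).trans ?_
    rw [(P.complex.linearYonedaObj R Y).shape _ _ (by simp)]
    exact ⟨fun h => ⟨0, h.symm⟩, fun ⟨_, h⟩ => h.symm⟩
  · rw [CochainComplex.prev_nat_succ]
    exact P.extMk_eq_zero_iff _ _ rfl (d_comp_iCycles P _ z) p rfl

/-- The `n`-th cohomology of `Hom(P, Y)`, for a projective resolution `P` of `X`, computes
`Ext X Y n` linearly. -/
noncomputable def homologyLinearEquivExt (P : ProjectiveResolution X) (n : ℕ) (Y : C) :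
    (P.complex.linearYonedaObj R Y).homology n ≃ₗ[R] Abelian.Ext X Y n :=
  (((P.complex.linearYonedaObj R Y).homologyπ n).hom.quotKerEquivOfSurjective
      ((ModuleCat.epi_iff_surjective _).1 inferInstance)).symm ≪≫ₗ
    Submodule.quotEquivOfEq _ _ (ker_cyclesToExt P n Y).symm ≪≫ₗ
    (cyclesToExt (R := R) P n Y).quotKerEquivOfSurjective (cyclesToExt_surjective P n Y)

lemma homologyLinearEquivExt_homologyπ (P : ProjectiveResolution X) (n : ℕ) (Y : C)
    (z : (P.complex.linearYonedaObj R Y).cycles n) :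
    homologyLinearEquivExt P n Y (((P.complex.linearYonedaObj R Y).homologyπ n).hom z) =
      cyclesToExt P n Y z := by
  let π := ((P.complex.linearYonedaObj R Y).homologyπ n).hom
  have hπ : Function.Surjective π := (ModuleCat.epi_iff_surjective _).1 inferInstance
  have hsymm : (π.quotKerEquivOfSurjective hπ).symm (π z) = Submodule.Quotient.mk z :=
    (π.quotKerEquivOfSurjective hπ).symm_apply_eq.2 rfl
  simp only [homologyLinearEquivExt, LinearEquiv.trans_apply]
  erw [hsymm]
  rfl

lemma homologyLinearEquivExt_homologyMap {P : ProjectiveResolution X} {P' : ProjectiveResolution X'}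
    {g : X' ⟶ X} (φ : ProjectiveResolution.Hom P' P g) (n : ℕ) (Y : C)
    (x : (P.complex.linearYonedaObj R Y).homology n) :
    homologyLinearEquivExt P' n Y
        ((HomologicalComplex.homologyMap (linearYonedaObjMap R φ.hom Y) n).hom x) =
      (Ext.mk₀ g).comp (homologyLinearEquivExt P n Y x) (zero_add n) := by
  obtain ⟨z, rfl⟩ : ∃ z, ((P.complex.linearYonedaObj R Y).homologyπ n).hom z = x :=
    (ModuleCat.epi_iff_surjective _).1 inferInstance x
  have hz : ((P'.complex.linearYonedaObj R Y).iCycles n).hom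
      ((HomologicalComplex.cyclesMap (linearYonedaObjMap R φ.hom Y) n).hom z) =
      φ.hom.f n ≫ ((P.complex.linearYonedaObj R Y).iCycles n).hom z :=
    LinearMap.congr_fun (congrArg ModuleCat.Hom.hom (HomologicalComplex.cyclesMap_i
      (linearYonedaObjMap R φ.hom Y) n)) z
  rw [← LinearMap.comp_apply, ← ModuleCat.hom_comp, HomologicalComplex.homologyπ_naturality,
    ModuleCat.hom_comp, LinearMap.comp_apply, homologyLinearEquivExt_homologyπ,
    homologyLinearEquivExt_homologyπ]
  refine Eq.trans ?_ (P.mk₀_comp_extMk _ _ rfl (d_comp_iCycles P n z) φ).symm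
  simp only [cyclesToExt, LinearMap.coe_mk, AddHom.coe_mk, hz]

variable [EnoughProjectives C]

/-- The comparison of the two `Ext` modules of the library: the derived functors of `Hom`, by which
local cohomology is defined, and the morphisms in the derived category, which carry the long exact
sequences. -/
noncomputable def extLinearEquiv (X Y : C) (n : ℕ) :
    ((_root_.Ext R C n).obj (op X)).obj Y ≃ₗ[R] Abelian.Ext X Y n :=
  ((projectiveResolution X).isoExt n Y).toLinearEquiv ≪≫ₗ
    homologyLinearEquivExt (projectiveResolution X) n Y

lemma extLinearEquiv_map (g : X' ⟶ X) (Y : C) (n : ℕ)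
    (e : ((_root_.Ext R C n).obj (op X)).obj Y) :
    extLinearEquiv X' Y n ((((_root_.Ext R C n).map g.op).app Y).hom e) =
      (Ext.mk₀ g).comp (extLinearEquiv X Y n e) (zero_add n) := by
  let P := projectiveResolution X
  let P' := projectiveResolution X'
  let φ : ProjectiveResolution.Hom P' P g :=
    { hom := ProjectiveResolution.lift g P' P
      hom_f_zero_comp_π_f_zero := by
        simp only [ChainComplex.single₀_map_f_zero]
        exact ProjectiveResolution.lift_commutes_zero g P' P }
  refine Eq.trans ?_ (homologyLinearEquivExt_homologyMap φ n Y ((P.isoExt n Y).hom.hom e))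
  exact congrArg (homologyLinearEquivExt P' n Y)
    (LinearMap.congr_fun (congrArg ModuleCat.Hom.hom (isoExt_naturality φ n Y)) e)

lemma smul_ext_map_eq_zero_iff (a : R) (g : X' ⟶ X) (Y : C) (n : ℕ)
    (e : ((_root_.Ext R C n).obj (op X)).obj Y) :
    a • (((_root_.Ext R C n).map g.op).app Y).hom e = 0 ↔
      a • (Ext.mk₀ g).comp (extLinearEquiv (R := R) X Y n e) (zero_add n) = 0 := by
  rw [← extLinearEquiv_map, ← (extLinearEquiv (R := R) X' Y n).map_smul,
    LinearEquiv.map_eq_zero_iff]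

end ExtComparison

section LocalCohomology

variable {R : Type u} [CommRing R]

lemma mem_annihilator_colimit_iff {J : Type} [SmallCategory J] [IsFiltered J]
    (G : J ⥤ ModuleCat.{u} R) (a : R) :
    a ∈ Module.annihilator R (colimit G : ModuleCat R) ↔
      ∀ (j : J) (x : G.obj j), ∃ (k : J) (f : j ⟶ k), a • (G.map f).hom x = 0 := by
  have : PreservesFilteredColimitsOfSize.{0, 0} (forget (ModuleCat.{u} R)) :=
    preservesFilteredColimitsOfSize_shrink.{0, u, 0, u} _
  rw [Module.mem_annihilator]
  refine ⟨fun h j x => ?_, fun h z => ?_⟩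
  · obtain ⟨k, f, hf⟩ := Concrete.colimit_rep_eq_zero R G j (a • x) (by
      rw [map_smul]; exact h _)
    exact ⟨k, f, by rw [← map_smul]; exact hf⟩
  · obtain ⟨j, x, rfl⟩ := Concrete.colimit_exists_rep G z
    obtain ⟨k, f, hf⟩ := h j x
    rw [← colimit.w G f, ModuleCat.comp_apply, ← map_smul]
    exact (congrArg (colimit.ι G k).hom hf).trans (map_zero _)

/-- The inverse system of the quotients `R ⧸ I ^ s`; the colimit of their `Ext` modules in degree
`n` is the `n`-th local cohomology. -/
noncomputable abbrev powQuotients (I : Ideal R) : ℕᵒᵖ ⥤ ModuleCat.{u} R :=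
  localCohomology.ringModIdeals (localCohomology.idealPowersDiagram I)

theorem mem_annihilator_localCohomology_iff (I : Ideal R) (n : ℕ) (M : ModuleCat.{u} R) (a : R) :
    a ∈ Module.annihilator R ((localCohomology I n).obj M) ↔
      ∀ (s : ℕᵒᵖ) (e : Abelian.Ext ((powQuotients I).obj s) M n), ∃ (t : ℕᵒᵖ) (f : t ⟶ s),
        a • (Ext.mk₀ ((powQuotients I).map f)).comp e (zero_add n) = 0 := by
  let F := localCohomology.diagram (localCohomology.idealPowersDiagram I) n
  let T := powQuotients I
  let e : (localCohomology I n).obj M ≅ _ := colimitObjIsoColimitCompEvaluation F M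
  rw [e.toLinearEquiv.annihilator_eq, mem_annihilator_colimit_iff]
  constructor
  · intro h s x
    obtain ⟨y, rfl⟩ := (extLinearEquiv (R := R) (T.obj s) M n).surjective x
    obtain ⟨k, f, hf⟩ := h (op s) y
    exact ⟨k.unop, f.unop, (smul_ext_map_eq_zero_iff a (T.map f.unop) M n y).1 hf⟩
  · intro h s x
    let y : ((_root_.Ext R (ModuleCat.{u} R) n).obj (op (T.obj s.unop))).obj M := x
    obtain ⟨t, f, hf⟩ := h s.unop (extLinearEquiv (R := R) (T.obj s.unop) M n y)
    have := (smul_ext_map_eq_zero_iff a (T.map f) M n y).2 hf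
    exact ⟨op t, f.op, this⟩

lemma annihilator_localCohomology_mul_le {S : ShortComplex (ModuleCat.{u} R)} (hS : S.ShortExact)
    (I : Ideal R) (n : ℕ) :
    Module.annihilator R ((localCohomology I n).obj S.X₂) *
        Module.annihilator R ((localCohomology I (n + 1)).obj S.X₁) ≤
      Module.annihilator R ((localCohomology I n).obj S.X₃) := by
  refine Ideal.mul_le.2 fun a ha b hb => ?_
  rw [mem_annihilator_localCohomology_iff] at ha hb ⊢
  intro s e
  obtain ⟨t, f, hf⟩ := hb s (e.comp hS.extClass rfl)
  have hlift : (b • (Ext.mk₀ ((powQuotients I).map f)).comp e (zero_add n)).comp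
      hS.extClass rfl = 0 := by
    rw [Ext.smul_comp, Ext.comp_assoc _ _ _ (zero_add n) rfl (by omega), hf]
  obtain ⟨x, hx⟩ := Ext.covariant_sequence_exact₃ _ hS _ rfl hlift
  obtain ⟨k, g, hg⟩ := ha t x
  refine ⟨k, g ≫ f, ?_⟩
  calc (a * b) • (Ext.mk₀ ((powQuotients I).map (g ≫ f))).comp e (zero_add n)
      = a • (Ext.mk₀ ((powQuotients I).map g)).comp
          (b • (Ext.mk₀ ((powQuotients I).map f)).comp e (zero_add n)) (zero_add n) := by
        rw [Ext.comp_smul, Ext.mk₀_comp_mk₀_assoc, Functor.map_comp, mul_smul]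
    _ = (a • (Ext.mk₀ ((powQuotients I).map g)).comp x (zero_add n)).comp
          (Ext.mk₀ S.g) (add_zero n) := by
        rw [← hx, Ext.smul_comp, Ext.comp_assoc_of_third_deg_zero]
    _ = 0 := by rw [hg, Ext.zero_comp]

variable {M N N' : Type u} [AddCommGroup M] [Module R M] [AddCommGroup N] [Module R N]
  [AddCommGroup N'] [Module R N']

lemma annihilator_localCohomology_mul_ker_le {f : M →ₗ[R] N} (hf : Function.Surjective f)
    (I : Ideal R) (n : ℕ) :
    Module.annihilator R ((localCohomology I n).obj (.of R M)) *
        Module.annihilator R ((localCohomology I (n + 1)).obj (.of R (LinearMap.ker f))) ≤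
      Module.annihilator R ((localCohomology I n).obj (.of R N)) :=
  annihilator_localCohomology_mul_le (LinearMap.shortExact_shortComplexKer hf) I n

lemma annihilator_le_annihilator_localCohomology (I : Ideal R) (n : ℕ) :
    Module.annihilator R M ≤ Module.annihilator R ((localCohomology I n).obj (.of R M)) := by
  intro a ha
  rw [Module.mem_annihilator] at ha
  have hzero : a • 𝟙 (ModuleCat.of R M) = 0 := by ext x; exact ha x
  rw [mem_annihilator_localCohomology_iff]
  intro s e
  exact ⟨s, 𝟙 s, by rw [Ext.smul_eq_comp_mk₀, hzero, Ext.mk₀_zero, Ext.comp_zero]⟩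

lemma annihilator_localCohomology_zero_le_torsionOf {I : Ideal R} {z : M} {s : ℕ}
    (hz : I ^ s ≤ Ideal.torsionOf R M z) :
    Module.annihilator R ((localCohomology I 0).obj (.of R M)) ≤ Ideal.torsionOf R M z := by
  intro a ha
  rw [mem_annihilator_localCohomology_iff] at ha
  let φ : (powQuotients I).obj (op s) ⟶ .of R M :=
    ModuleCat.ofHom ((I ^ s).liftQ (LinearMap.toSpanSingleton R M z) hz)
  obtain ⟨t, f, hf⟩ := ha (op s) (Ext.mk₀ φ)
  rw [Ext.mk₀_comp_mk₀, ← Ext.mk₀_smul, Ext.mk₀_eq_zero_iff] at hf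
  rw [Ideal.mem_torsionOf_iff]
  have happ := LinearMap.congr_fun (congrArg ModuleCat.Hom.hom hf) (Submodule.Quotient.mk 1)
  rwa [← one_smul R z]

/-- The common annihilator of the local cohomology modules of `M` in degrees `i < n`, the ideal that
measures how far `M` is from having depth at least `n`. -/
noncomputable def lowerCohomologyAnnihilator (I : Ideal R) (n : ℕ) (M : Type u) [AddCommGroup M]
    [Module R M] : Ideal R :=
  ⨅ i < n, Module.annihilator R ((localCohomology I i).obj (.of R M))

lemma lowerCohomologyAnnihilator_le (I : Ideal R) (M : Type u) [AddCommGroup M] [Module R M]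
    {i n : ℕ} (h : i < n) :
    lowerCohomologyAnnihilator I n M ≤
      Module.annihilator R ((localCohomology I i).obj (.of R M)) :=
  iInf₂_le i h

lemma lowerCohomologyAnnihilator_congr (I : Ideal R) (n : ℕ) (e : M ≃ₗ[R] N) :
    lowerCohomologyAnnihilator I n M = lowerCohomologyAnnihilator I n N :=
  iInf_congr fun i => iInf_congr fun _ =>
    ((localCohomology I i).mapIso e.toModuleIso).toLinearEquiv.annihilator_eq

lemma lowerCohomologyAnnihilator_le_torsionOf {I : Ideal R} {z : M} {s : ℕ}
    (hz : I ^ s ≤ Ideal.torsionOf R M z) (n : ℕ) :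
    lowerCohomologyAnnihilator I (n + 1) M ≤ Ideal.torsionOf R M z :=
  (lowerCohomologyAnnihilator_le I M n.succ_pos).trans
    (annihilator_localCohomology_zero_le_torsionOf hz)

lemma annihilator_localCohomology_mul_mul_le {f : M →ₗ[R] N} {g : N →ₗ[R] N'}
    (hfg : Function.Exact f g) (hg : Function.Surjective g) (I : Ideal R) (n : ℕ) :
    Module.annihilator R ((localCohomology I n).obj (.of R N)) *
        (Module.annihilator R ((localCohomology I (n + 1)).obj (.of R M)) *
          Module.annihilator R (LinearMap.ker f)) ≤
      Module.annihilator R ((localCohomology I n).obj (.of R N')) := by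
  have hrange := annihilator_localCohomology_mul_ker_le f.surjective_rangeRestrict I (n + 1)
  have hN' := annihilator_localCohomology_mul_ker_le hg I n
  rw [f.ker_rangeRestrict] at hrange
  rw [hfg.linearMap_ker_eq] at hN'
  exact (Ideal.mul_mono_right ((Ideal.mul_mono_right
    (annihilator_le_annihilator_localCohomology I _)).trans hrange)).trans hN'

lemma lowerCohomologyAnnihilator_pow_three_le {f : M →ₗ[R] M} {g : M →ₗ[R] N}
    (hfg : Function.Exact f g) (hg : Function.Surjective g) {I : Ideal R} {n : ℕ}
    (hf : lowerCohomologyAnnihilator I (n + 1) M ≤ Module.annihilator R (LinearMap.ker f)) :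
    lowerCohomologyAnnihilator I (n + 1) M ^ 3 ≤ lowerCohomologyAnnihilator I n N := by
  refine le_iInf₂ fun i hi => le_trans ?_ (annihilator_localCohomology_mul_mul_le hfg hg I i)
  rw [pow_succ', pow_two]
  exact mul_le_mul' (lowerCohomologyAnnihilator_le I M (by omega))
    (mul_le_mul' (lowerCohomologyAnnihilator_le I M (by omega)) hf)

end LocalCohomology

section Torsion

lemma radical_le_radical_of_pow_le {R : Type*} [CommSemiring R] {I J : Ideal R} {n : ℕ}
    (h : I ^ n ≤ J) : I.radical ≤ J.radical :=
  Ideal.radical_le_radical_iff.2 fun _ ha => ⟨n, h (Ideal.pow_mem_pow ha n)⟩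

lemma minimalPrimes_torsionOf_subset_associatedPrimes {R M : Type*} [CommRing R]
    [IsNoetherianRing R] [AddCommGroup M] [Module R M] (z : M) :
    (Ideal.torsionOf R M z).minimalPrimes ⊆ associatedPrimes R M := by
  rw [← Ideal.annihilator_span_singleton_eq_torsionOf]
  exact (Module.associatedPrimes.minimalPrimes_annihilator_subset_associatedPrimes R _).trans
    (associatedPrimes.subset_of_injective (Submodule.injective_subtype (Submodule.span R {z})))

variable {R : Type u} [CommRing R] [IsLocalRing R]

lemma maximalIdeal_le_radical_of_mem_minimalPrimes {J : Ideal R}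
    (h : maximalIdeal R ∈ J.minimalPrimes) : maximalIdeal R ≤ J.radical := by
  rw [Ideal.radical_eq_sInf, le_sInf_iff]
  exact fun q ⟨hJq, hq⟩ => h.2 ⟨hq, hJq⟩ (le_maximalIdeal hq.ne_top)

lemma exists_pow_maximalIdeal_le_annihilator {M : Type*} [AddCommGroup M] [Module R M]
    (h : IsFiniteLength R M) : ∃ t : ℕ, maximalIdeal R ^ t ≤ Module.annihilator R M := by
  obtain ⟨_, _⟩ := isFiniteLength_iff_isNoetherian_isArtinian.1 h
  let f : ℕ →o (Submodule R M)ᵒᵈ :=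
    ⟨fun s => maximalIdeal R ^ s • (⊤ : Submodule R M),
      fun _ _ hst => Submodule.smul_mono_left (Ideal.pow_le_pow_right hst)⟩
  obtain ⟨t, ht⟩ := IsArtinian.monotone_stabilizes f
  have hbot : maximalIdeal R ^ t • (⊤ : Submodule R M) = ⊥ := by
    refine Submodule.eq_bot_of_le_smul_of_le_jacobson_bot (maximalIdeal R) _
      (IsNoetherian.noetherian _) (le_of_eq ?_) (maximalIdeal_le_jacobson _)
    rw [← mul_smul, ← pow_succ']
    exact ht (t + 1) t.le_succ
  exact ⟨t, by rwa [← Submodule.annihilator_top, Submodule.le_annihilator_iff]⟩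

lemma exists_pow_maximalIdeal_le_lowerCohomologyAnnihilator {M : Type u} [AddCommGroup M]
    [Module R M] {d : ℕ}
    (h : ∀ i < d, IsFiniteLength R ((localCohomology (maximalIdeal R) i).obj (.of R M))) :
    ∃ t : ℕ, maximalIdeal R ^ t ≤ lowerCohomologyAnnihilator (maximalIdeal R) d M := by
  choose! t ht using fun i hi => exists_pow_maximalIdeal_le_annihilator (h i hi)
  refine ⟨∑ i ∈ Finset.range d, t i, le_iInf₂ fun i hi => le_trans ?_ (ht i hi)⟩
  exact Ideal.pow_le_pow_right
    (Finset.single_le_sum (fun _ _ => Nat.zero_le _) (Finset.mem_range.2 hi))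

variable {M : Type u} [AddCommGroup M] [Module R M]

/-- An element is filter-regular on `M` if it avoids all associated primes of `M` except possibly
the maximal ideal; membership in `𝔪` is not part of the definition. -/
def IsFilterRegular (M : Type u) [AddCommGroup M] [Module R M] (y : R) : Prop :=
  ∀ p ∈ associatedPrimes R M, p ≠ maximalIdeal R → y ∉ p

lemma IsFilterRegular.pow {y : R} (hy : IsFilterRegular M y) (k : ℕ) :
    IsFilterRegular M (y ^ k) := fun p hp hpm hyp =>
  hy p hp hpm (hp.isPrime.mem_of_pow_mem k hyp)

variable [IsNoetherianRing R]

lemma supportDim_le_card_of_maximalIdeal_le_radical (s : Finset R) :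
    ∀ {M : Type*} [AddCommGroup M] [Module R M] [Module.Finite R M],
      (↑s : Set R) ⊆ maximalIdeal R →
      maximalIdeal R ≤ (Module.annihilator R M ⊔ Ideal.span (s : Set R)).radical →
      Module.supportDim R M ≤ s.card := by
  classical
  induction s using Finset.induction_on with
  | empty =>
    intro M _ _ _ _ h
    have hmax : ∀ p ∈ Module.support R M, p.asIdeal = maximalIdeal R := fun p hp => by
      rw [Module.mem_support_iff_of_finite] at hp
      rw [Finset.coe_empty, Ideal.span_empty, sup_bot_eq] at h
      exact le_antisymm (le_maximalIdeal p.2.ne_top) (h.trans (p.2.radical_le_iff.2 hp))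
    have : Subsingleton (Module.support R M) := ⟨fun p q =>
      Subtype.ext (PrimeSpectrum.ext ((hmax p p.2).trans (hmax q q.2).symm))⟩
    exact Order.krullDim_nonpos_of_subsingleton
  | insert x s hx ih =>
    intro M _ _ _ hs h
    rw [Finset.coe_insert, Set.insert_subset_iff] at hs
    have hx' : x ∈ Module.annihilator R (QuotSMulTop x M) :=
      QuotSMulTop.mem_annihilator M x
    have hle : Module.annihilator R M ≤ Module.annihilator R (QuotSMulTop x M) :=
      LinearMap.annihilator_le_of_surjective _ (Submodule.mkQ_surjective _)
    have hdim : Module.supportDim R (QuotSMulTop x M) ≤ s.card := by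
      refine ih hs.2 (h.trans (Ideal.radical_mono (sup_le (hle.trans le_sup_left) ?_)))
      rw [Finset.coe_insert, Ideal.span_insert]
      exact sup_le_sup_right ((Ideal.span_singleton_le_iff_mem _).2 hx') _
    rw [Finset.card_insert_of_notMem hx, Nat.cast_add, Nat.cast_one]
    exact (Module.supportDim_le_supportDim_quotSMulTop_succ hs.1).trans (by gcongr)

lemma exists_mem_maximalIdeal_isFilterRegular (M : Type u) [AddCommGroup M] [Module R M]
    [Module.Finite R M] : ∃ y ∈ maximalIdeal R, IsFilterRegular M y := by
  by_contra! hcon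
  simp only [IsFilterRegular, not_forall, not_not] at hcon
  have hcover : (maximalIdeal R : Set R) ⊆
      ⋃ p ∈ associatedPrimes R M \ {maximalIdeal R}, (p : Set R) := fun y hy => by
    obtain ⟨p, hp, hpm, hyp⟩ := hcon y hy
    exact Set.mem_biUnion ⟨hp, hpm⟩ hyp
  obtain ⟨p, ⟨hp, hpm⟩, hle⟩ :=
    (Ideal.subset_union_prime_finite ((associatedPrimes.finite R M).sdiff) ⊥ ⊥
      fun p hp _ _ => hp.1.isPrime).1 hcover
  exact hpm (le_antisymm (le_maximalIdeal hp.isPrime.ne_top) hle)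

lemma IsFilterRegular.maximalIdeal_le_radical_torsionOf {y : R} (hy : IsFilterRegular M y) {z : M}
    (hz : y • z = 0) : maximalIdeal R ≤ (Ideal.torsionOf R M z).radical := by
  rw [← Ideal.sInf_minimalPrimes, le_sInf_iff]
  intro p hp
  by_contra hne
  exact hy p (minimalPrimes_torsionOf_subset_associatedPrimes z hp) (fun h => hne h.ge)
    (hp.1.2 hz)

lemma lowerCohomologyAnnihilator_le_torsionOf_of_le_radical {z : M}
    (hz : maximalIdeal R ≤ (Ideal.torsionOf R M z).radical) (n : ℕ) :
    lowerCohomologyAnnihilator (maximalIdeal R) (n + 1) M ≤ Ideal.torsionOf R M z := by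
  obtain ⟨s, hs⟩ := Ideal.exists_pow_le_of_le_radical_of_fg hz (IsNoetherian.noetherian _)
  exact lowerCohomologyAnnihilator_le_torsionOf hs n

lemma IsFilterRegular.lowerCohomologyAnnihilator_le_annihilator_ker {y : R}
    (hy : IsFilterRegular M y) (n : ℕ) :
    lowerCohomologyAnnihilator (maximalIdeal R) (n + 1) M ≤
      Module.annihilator R (LinearMap.ker (LinearMap.lsmul R M y)) := by
  intro a ha
  rw [Module.mem_annihilator]
  exact fun z => Subtype.ext (lowerCohomologyAnnihilator_le_torsionOf_of_le_radical
    (hy.maximalIdeal_le_radical_torsionOf z.2) n ha)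

lemma IsFilterRegular.lowerCohomologyAnnihilator_pow_three_le {y : R}
    (hy : IsFilterRegular M y) (n : ℕ) :
    lowerCohomologyAnnihilator (maximalIdeal R) (n + 1) M ^ 3 ≤
      lowerCohomologyAnnihilator (maximalIdeal R) n (QuotSMulTop y M) :=
  _root_.lowerCohomologyAnnihilator_pow_three_le (LinearMap.exact_lsmul_mkQ_smul_top M y)
    (Submodule.mkQ_surjective _) (hy.lowerCohomologyAnnihilator_le_annihilator_ker n)

lemma IsFilterRegular.supportDim_span_mkQ_add_one_le {y : R} (hy : IsFilterRegular M y) {z : M}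
    (hz : maximalIdeal R ∉ (Ideal.torsionOf R M z).minimalPrimes) :
    Module.supportDim R (Submodule.span R {(Submodule.mkQ _ z : QuotSMulTop y M)}) + 1 ≤
      Module.supportDim R (Submodule.span R {z}) := by
  let f : QuotSMulTop y (Submodule.span R {z}) →ₗ[R] QuotSMulTop y M :=
    QuotSMulTop.map y (Submodule.subtype _)
  have hz' : Submodule.span R {Submodule.mkQ _ z} ≤ LinearMap.range f := by
    rw [Submodule.span_singleton_le_iff_mem]
    exact ⟨Submodule.mkQ _ ⟨z, Submodule.mem_span_singleton_self z⟩, rfl⟩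
  have hmin : ∀ p ∈ (Module.annihilator R (Submodule.span R {z})).minimalPrimes, y ∉ p := by
    intro p hp
    change p ∈ (Submodule.annihilator (Submodule.span R {z})).minimalPrimes at hp
    rw [Ideal.annihilator_span_singleton_eq_torsionOf] at hp
    exact hy p (minimalPrimes_torsionOf_subset_associatedPrimes z hp) fun h => hz (h ▸ hp)
  calc Module.supportDim R (Submodule.span R {(Submodule.mkQ _ z : QuotSMulTop y M)}) + 1
      ≤ Module.supportDim R (QuotSMulTop y (Submodule.span R {z})) + 1 := by
        gcongr
        exact (Module.supportDim_le_of_injective _ (Submodule.inclusion_injective hz')).trans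
          (Module.supportDim_le_of_surjective _ f.surjective_rangeRestrict)
    _ ≤ Module.supportDim R (Submodule.span R {z}) :=
        Module.supportDim_quotSMulTop_succ_le_of_notMem_minimalPrimes hmin

lemma le_torsionOf_of_forall_le_torsionOf_mkQ [Module.Finite R M] {y : R}
    (hy : y ∈ maximalIdeal R) {I : Ideal R} {z : M}
    (h : ∀ k : ℕ, I ≤ Ideal.torsionOf R (QuotSMulTop (y ^ k) M) (Submodule.mkQ _ z)) :
    I ≤ Ideal.torsionOf R M z := by
  intro a ha
  rw [Ideal.mem_torsionOf_iff, ← Submodule.mem_bot R,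
    ← Ideal.iInf_pow_smul_eq_bot_of_isLocalRing (maximalIdeal R) (Ideal.IsPrime.ne_top'),
    Submodule.mem_iInf]
  intro k
  obtain ⟨w, hw⟩ := (LinearMap.exact_lsmul_mkQ_smul_top M (y ^ k) (a • z)).1 (h k ha)
  exact hw ▸ Submodule.smul_mem_smul (Ideal.pow_mem_pow hy k) trivial

theorem lowerCohomologyAnnihilator_le_torsionOf_of_supportDim_lt {n : ℕ} :
    ∀ {M : Type u} [AddCommGroup M] [Module R M] [Module.Finite R M] {z : M},
      maximalIdeal R ≤ (lowerCohomologyAnnihilator (maximalIdeal R) n M).radical →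
      Module.supportDim R (Submodule.span R {z}) < n →
      lowerCohomologyAnnihilator (maximalIdeal R) n M ≤ Ideal.torsionOf R M z := by
  induction n with
  | zero =>
    intro M _ _ _ z _ hz
    have : Subsingleton (Submodule.span R {z}) := by
      rwa [← Module.supportDim_eq_bot_iff_subsingleton R, ← WithBot.lt_zero_iff_eq_bot]
    rw [Submodule.subsingleton_iff_eq_bot, Submodule.span_singleton_eq_bot] at this
    rw [this, Ideal.torsionOf_zero]
    exact le_top
  | succ n ih =>
    intro M _ _ _ z hrad hz
    by_cases hmin : maximalIdeal R ∈ (Ideal.torsionOf R M z).minimalPrimes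
    · exact lowerCohomologyAnnihilator_le_torsionOf_of_le_radical
        (maximalIdeal_le_radical_of_mem_minimalPrimes hmin) n
    obtain ⟨y, hym, hy⟩ := exists_mem_maximalIdeal_isFilterRegular (R := R) M
    set A := lowerCohomologyAnnihilator (maximalIdeal R) (n + 1) M
    have hquot (k : ℕ) :
        A ^ 3 ≤ Ideal.torsionOf R (QuotSMulTop (y ^ k) M) (Submodule.mkQ _ z) := by
      have hA := (hy.pow k).lowerCohomologyAnnihilator_pow_three_le n
      refine hA.trans (ih ?_ ?_)
      · exact hrad.trans (radical_le_radical_of_pow_le hA)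
      · exact lt_of_add_lt_add_right
          (((hy.pow k).supportDim_span_mkQ_add_one_le hmin).trans_lt (by exact_mod_cast hz))
    have htors : A ^ 3 ≤ Ideal.torsionOf R M z :=
      le_torsionOf_of_forall_le_torsionOf_mkQ hym hquot
    exact lowerCohomologyAnnihilator_le_torsionOf_of_le_radical
      (hrad.trans (radical_le_radical_of_pow_le htors)) n

end Torsion

section InitialIdeal

variable {R : Type u} [CommRing R] {d : ℕ}

/-- The ideal `(y_0, …, y_{i-1})` generated by the first `i` entries of `y`, written in the form in
which it occurs in `IsDSequence`; for `i ≥ d` it is generated by all entries. -/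
def initialIdeal (y : Fin d → R) (i : ℕ) : Ideal R :=
  Ideal.span (y '' {j : Fin d | (j : ℕ) < i})

lemma initialIdeal_zero (y : Fin d → R) : initialIdeal y 0 = ⊥ := by
  simp only [initialIdeal, Nat.not_lt_zero, Set.ofPred_false, Set.image_empty, Ideal.span_empty]

lemma initialIdeal_succ (y : Fin d → R) {i : ℕ} (hi : i < d) :
    initialIdeal y (i + 1) = initialIdeal y i ⊔ Ideal.span {y ⟨i, hi⟩} := by
  have hinsert : {j : Fin d | (j : ℕ) < i + 1} = {j : Fin d | (j : ℕ) < i} ∪ {⟨i, hi⟩} := by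
    ext j
    simp only [Set.mem_ofPred_eq, Set.union_singleton, Set.mem_insert_iff, Fin.ext_iff]
    omega
  rw [initialIdeal, initialIdeal, hinsert, Set.image_union, Set.image_singleton, Ideal.span_union]

lemma smul_quotientMk_eq_zero_iff {I : Ideal R} {a b : R} :
    a • Ideal.Quotient.mk I b = 0 ↔ a * b ∈ I :=
  Ideal.Quotient.eq_zero_iff_mem

lemma exact_lsmul_factor_sup_span_singleton (I : Ideal R) (a : R) :
    Function.Exact (LinearMap.lsmul R (R ⧸ I) a)
      (Submodule.factor (le_sup_left : I ≤ I ⊔ Ideal.span {a})) := by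
  intro z
  obtain ⟨b, rfl⟩ := Submodule.mkQ_surjective _ z
  change Submodule.Quotient.mk (p := I ⊔ Ideal.span {a}) b = 0 ↔ _
  rw [Submodule.Quotient.mk_eq_zero]
  refine ⟨fun hb => ?_, ?_⟩
  · obtain ⟨c, hc, w, hw, rfl⟩ := Submodule.mem_sup.1 hb
    obtain ⟨w, rfl⟩ := Ideal.mem_span_singleton.1 hw
    refine ⟨Submodule.Quotient.mk w, ((Submodule.Quotient.eq I).2 ?_).symm⟩
    exact (add_sub_cancel_right c (a * w)).symm ▸ hc
  · rintro ⟨w, hw⟩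
    obtain ⟨w, rfl⟩ := Submodule.mkQ_surjective _ w
    have hsub : b - a * w ∈ I := (Submodule.Quotient.eq I).1 hw.symm
    exact sub_add_cancel b (a * w) ▸ add_mem (Ideal.mem_sup_left hsub)
      (Ideal.mem_sup_right (Ideal.mul_mem_right w _ (Ideal.mem_span_singleton_self a)))

lemma radical_span_range_pow {ι : Type*} (x : ι → R) {m : ι → ℕ} (hm : ∀ j, m j ≠ 0) :
    (Ideal.span (Set.range fun j => x j ^ m j)).radical = (Ideal.span (Set.range x)).radical := by
  refine le_antisymm (Ideal.radical_mono (Ideal.span_le.2 ?_))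
    (Ideal.radical_le_radical_iff.2 (Ideal.span_le.2 ?_))
  · rintro _ ⟨j, rfl⟩
    exact Ideal.pow_mem_of_mem _ (Ideal.subset_span (Set.mem_range_self j)) _
      (Nat.pos_of_ne_zero (hm j))
  · rintro _ ⟨j, rfl⟩
    exact ⟨m j, Ideal.subset_span (Set.mem_range_self j)⟩

end InitialIdeal

section Parameters

variable {R : Type u} [CommRing R] [IsLocalRing R] [IsNoetherianRing R] {d : ℕ} {y : Fin d → R}

lemma supportDim_span_singleton_lt_of_pow_smul_eq_zero
    (hy : (Ideal.span (Set.range y)).radical = maximalIdeal R) {i : ℕ} {k : Fin d}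
    (hik : i ≤ k) {e : ℕ} {z : R ⧸ initialIdeal y i} (hz : y k ^ e • z = 0) :
    Module.supportDim R (Submodule.span R {z}) < (d - i : ℕ) := by
  classical
  have hi : i < d := hik.trans_lt k.isLt
  let s : Finset R := ((Finset.Ici (⟨i, hi⟩ : Fin d)).erase k).image y
  have hs : (s : Set R) ⊆ maximalIdeal R := by
    rw [Finset.coe_image, ← hy]
    exact (Set.image_subset_range _ _).trans (Ideal.subset_span.trans Ideal.le_radical)
  have hcard : s.card < d - i := by
    refine Finset.card_image_le.trans_lt ?_
    rw [Finset.card_erase_of_mem (Finset.mem_Ici.2 (Fin.mk_le_of_le_val hik)), Fin.card_Ici]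
    exact Nat.sub_lt (Nat.sub_pos_of_lt hi) one_pos
  have hrad : maximalIdeal R ≤
      (Module.annihilator R (Submodule.span R {z}) ⊔ Ideal.span (s : Set R)).radical := by
    change _ ≤ ((Submodule.span R {z}).annihilator ⊔ _).radical
    rw [← hy, Ideal.annihilator_span_singleton_eq_torsionOf, Ideal.radical_le_radical_iff,
      Ideal.span_le]
    rintro _ ⟨j, rfl⟩
    by_cases hji : (j : ℕ) < i
    · have hyj : y j ∈ initialIdeal y i := Ideal.subset_span ⟨j, hji, rfl⟩
      obtain ⟨b, rfl⟩ := Ideal.Quotient.mk_surjective z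
      exact Ideal.le_radical (Ideal.mem_sup_left
        (smul_quotientMk_eq_zero_iff.2 (Ideal.mul_mem_right b _ hyj)))
    by_cases hjk : j = k
    · exact hjk ▸ ⟨e, Ideal.mem_sup_left hz⟩
    · refine Ideal.le_radical (Ideal.mem_sup_right (Ideal.subset_span ?_))
      exact Finset.mem_image_of_mem y
        (Finset.mem_erase.2 ⟨hjk, Finset.mem_Ici.2 (not_lt.1 hji)⟩)
  exact (supportDim_le_card_of_maximalIdeal_le_radical s hs hrad).trans_lt (by exact_mod_cast hcard)

lemma lowerCohomologyAnnihilator_le_torsionOf_of_pow_smul_eq_zero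
    (hy : (Ideal.span (Set.range y)).radical = maximalIdeal R) {i : ℕ}
    (hA : maximalIdeal R ≤
      (lowerCohomologyAnnihilator (maximalIdeal R) (d - i) (R ⧸ initialIdeal y i)).radical)
    {k : Fin d} (hik : i ≤ k) {e : ℕ} {z : R ⧸ initialIdeal y i} (hz : y k ^ e • z = 0) :
    lowerCohomologyAnnihilator (maximalIdeal R) (d - i) (R ⧸ initialIdeal y i) ≤
      Ideal.torsionOf R _ z :=
  lowerCohomologyAnnihilator_le_torsionOf_of_supportDim_lt hA
    (supportDim_span_singleton_lt_of_pow_smul_eq_zero hy hik hz)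

lemma lowerCohomologyAnnihilator_pow_le_quotient_initialIdeal
    (hy : (Ideal.span (Set.range y)).radical = maximalIdeal R)
    (hA : maximalIdeal R ≤ (lowerCohomologyAnnihilator (maximalIdeal R) d R).radical) {i : ℕ}
    (hi : i ≤ d) :
    lowerCohomologyAnnihilator (maximalIdeal R) d R ^ 3 ^ i ≤
      lowerCohomologyAnnihilator (maximalIdeal R) (d - i) (R ⧸ initialIdeal y i) := by
  induction i with
  | zero =>
    rw [pow_zero, pow_one, Nat.sub_zero]
    exact (lowerCohomologyAnnihilator_congr _ _
      (Submodule.quotEquivOfEqBot _ (initialIdeal_zero y))).ge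
  | succ i ih =>
    specialize ih (Nat.le_of_succ_le hi)
    have hdi : d - i = d - (i + 1) + 1 := by omega
    have hrad := hA.trans (radical_le_radical_of_pow_le ih)
    have hker : lowerCohomologyAnnihilator (maximalIdeal R) (d - i) (R ⧸ initialIdeal y i) ≤
        Module.annihilator R
          (LinearMap.ker (LinearMap.lsmul R (R ⧸ initialIdeal y i) (y ⟨i, hi⟩))) := by
      refine fun a ha => Module.mem_annihilator.2 fun z => Subtype.ext ?_
      refine lowerCohomologyAnnihilator_le_torsionOf_of_pow_smul_eq_zero hy hrad
        (k := ⟨i, hi⟩) (e := 1) le_rfl ?_ ha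
      exact (pow_one (y ⟨i, hi⟩)).symm ▸ z.2
    rw [hdi] at hker ih
    rw [pow_succ, pow_mul, initialIdeal_succ y hi]
    exact (Ideal.pow_right_mono ih 3).trans (lowerCohomologyAnnihilator_pow_three_le
      (exact_lsmul_factor_sup_span_singleton _ _) (Submodule.factor_surjective le_sup_left) hker)

theorem isDSequence_of_mem_lowerCohomologyAnnihilator_pow
    (hy : (Ideal.span (Set.range y)).radical = maximalIdeal R)
    (hA : maximalIdeal R ≤ (lowerCohomologyAnnihilator (maximalIdeal R) d R).radical)
    (hmem : ∀ j, y j ∈ lowerCohomologyAnnihilator (maximalIdeal R) d R ^ 3 ^ d) :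
    IsDSequence y := by
  intro i hi k hik
  have hle := lowerCohomologyAnnihilator_pow_le_quotient_initialIdeal hy hA hi.le
  have hrad := hA.trans (radical_le_radical_of_pow_le hle)
  have hyk : y k ∈ lowerCohomologyAnnihilator (maximalIdeal R) (d - i) (R ⧸ initialIdeal y i) :=
    hle (Ideal.pow_le_pow_right (Nat.pow_le_pow_right three_pos hi.le) (hmem k))
  change (initialIdeal y i).colon _ = (initialIdeal y i).colon _
  ext a
  simp only [Ideal.colon_span, Submodule.mem_colon_singleton, smul_eq_mul]
  refine ⟨fun ha => ?_, fun ha => ?_⟩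
  · have hzero : y ⟨i, hi⟩ ^ 1 • Ideal.Quotient.mk (initialIdeal y i) (a * y k) = 0 := by
      rwa [smul_quotientMk_eq_zero_iff, pow_one, mul_left_comm]
    have hsq : y k ^ 2 • Ideal.Quotient.mk (initialIdeal y i) a = 0 := by
      have h := lowerCohomologyAnnihilator_le_torsionOf_of_pow_smul_eq_zero hy hrad
        (k := ⟨i, hi⟩) le_rfl hzero hyk
      rw [Ideal.mem_torsionOf_iff, smul_quotientMk_eq_zero_iff] at h
      rwa [smul_quotientMk_eq_zero_iff, pow_two, mul_assoc, mul_comm (y k) a]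
    rw [mul_comm]
    exact smul_quotientMk_eq_zero_iff.1
      (lowerCohomologyAnnihilator_le_torsionOf_of_pow_smul_eq_zero hy hrad hik hsq hyk)
  · rw [mul_left_comm]
    exact Ideal.mul_mem_left _ _ ha

theorem isUSDSequence_of_mem_lowerCohomologyAnnihilator_pow
    (hy : (Ideal.span (Set.range y)).radical = maximalIdeal R)
    (hA : maximalIdeal R ≤ (lowerCohomologyAnnihilator (maximalIdeal R) d R).radical)
    (hmem : ∀ j, y j ∈ lowerCohomologyAnnihilator (maximalIdeal R) d R ^ 3 ^ d) :
    IsUSDSequence y := by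
  intro m hm σ
  refine isDSequence_of_mem_lowerCohomologyAnnihilator_pow ?_ hA
    fun j => Ideal.pow_mem_of_mem _ (hmem _) _ (hm _)
  rw [← hy, ← radical_span_range_pow y fun j => Nat.one_le_iff_ne_zero.1 (hm j)]
  exact congrArg (fun s => (Ideal.span s).radical) (σ.surjective.range_comp fun j => y j ^ m j)

end Parameters

/-- if `(R,𝔪)` is a generalized Cohen–Macaulay Noetherian local ring of
dimension `d` (all lower local cohomologies `H_𝔪^i(R)`, `i < d`, have finite length), then
there is `t` such that every system of parameters contained in `𝔪^t` is a USD-sequence; in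
particular for every sop `x_1,…,x_d` the powers `x_1^n,…,x_d^n` are a USD-sequence for all
`n ≫ 0`. -/
theorem stmt9 {R : Type u} [CommRing R] [IsLocalRing R] [IsNoetherianRing R]
    (d : ℕ) (hd : ringKrullDim R = d)
    (hGCM : ∀ i : ℕ, i < d →
      IsFiniteLength R ((localCohomology (maximalIdeal R) i).obj (ModuleCat.of R R))) :
    (∃ t : ℕ, ∀ x : Fin d → R,
        (Ideal.span (Set.range x)).radical = maximalIdeal R →
        (∀ j, x j ∈ maximalIdeal R ^ t) → IsUSDSequence x) ∧
      ∀ x : Fin d → R, (Ideal.span (Set.range x)).radical = maximalIdeal R →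
        ∃ N : ℕ, ∀ n ≥ N, IsUSDSequence (fun j => x j ^ n) := by
  obtain ⟨t, ht⟩ := exists_pow_maximalIdeal_le_lowerCohomologyAnnihilator hGCM
  have hA : maximalIdeal R ≤ (lowerCohomologyAnnihilator (maximalIdeal R) d R).radical :=
    Ideal.le_radical.trans (radical_le_radical_of_pow_le ht)
  have hle : maximalIdeal R ^ (t * 3 ^ d) ≤
      lowerCohomologyAnnihilator (maximalIdeal R) d R ^ 3 ^ d := by
    rw [pow_mul]
    exact Ideal.pow_right_mono ht _
  have husd (x : Fin d → R) (hx : (Ideal.span (Set.range x)).radical = maximalIdeal R)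
      (hmem : ∀ j, x j ∈ maximalIdeal R ^ (t * 3 ^ d)) : IsUSDSequence x :=
    isUSDSequence_of_mem_lowerCohomologyAnnihilator_pow hx hA fun j => hle (hmem j)
  refine ⟨⟨t * 3 ^ d, husd⟩, fun x hx => ⟨t * 3 ^ d + 1, fun n hn => husd _ ?_ fun j => ?_⟩⟩
  · rw [radical_span_range_pow x fun _ => by omega, hx]
  · have hxj : x j ∈ maximalIdeal R := hx ▸ Ideal.le_radical (Ideal.subset_span ⟨j, rfl⟩)
    exact Ideal.pow_le_pow_right (by omega) (Ideal.pow_mem_pow hxj n)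
end

section
/- Let (R,m) be an ℕ-graded isolated non-F-rational singularity with a homogeneous sop x_1,...,x_d forming a USD-sequence (after replacing by a power if necessary). Then the tight closure of zero in the top local cohomology satisfies (0)^*_{H_m^d(R)} = ∪_{n>0} Z_n(nδ) where Z_n = (x_1^n,...,x_d^n)^*/(x_1^n,...,x_d^n)^lim and δ = Σ_{j=1}^d deg(x_j). -/
universe u

open IsLocalRing

noncomputable section

def offMinimalPrimes (R : Type*) [CommRing R] : Set R :=
  {c : R | ∀ P ∈ minimalPrimes R, c ∉ P}

def frobeniusPower {R : Type*} [CommRing R] (I : Ideal R) (q : ℕ) : Ideal R :=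
  Ideal.span ((fun r => r ^ q) '' (I : Set R))

def tightClosure {R : Type*} [CommRing R] (p : ℕ) (I : Ideal R) : Set R :=
  {z : R | ∃ c ∈ offMinimalPrimes R, ∃ e₀ : ℕ, ∀ e ≥ e₀,
    c * z ^ p ^ e ∈ frobeniusPower I (p ^ e)}

def idealHeight {R : Type*} [CommRing R] (I : Ideal R) : ℕ∞ :=
  ⨅ (P : PrimeSpectrum R) (_ : I ≤ P.asIdeal), Order.height P

/-- A parameter ideal: generated by as many elements as its height. -/
def IsParameterIdeal {R : Type*} [CommRing R] (I : Ideal R) : Prop :=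
  ∃ (n : ℕ) (y : Fin n → R), I = Ideal.span (Set.range y) ∧ idealHeight I = (n : ℕ∞)

/-- `F`-rationality: every parameter ideal is tightly closed. -/
def IsFRational (p : ℕ) (S : Type*) [CommRing S] : Prop :=
  ∀ I : Ideal S, IsParameterIdeal I → tightClosure p I = (I : Set S)

/-- Isolated non-`F`-rational singularity: `R_P` is `F`-rational for every prime `P ≠ 𝔪`. -/
def IsIsolatedNonFRational {R : Type*} [CommRing R] (p : ℕ) (𝔪 : Ideal R) : Prop :=
  ∀ P : PrimeSpectrum R, P.asIdeal ≠ 𝔪 → IsFRational p (Localization.AtPrime P.asIdeal)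

/-- The ideal generated by the first `i` entries of `x`. -/
def firstIdeal {R : Type*} [CommRing R] {d : ℕ} (x : Fin d → R) (i : ℕ) : Ideal R :=
  Ideal.span (x '' {j : Fin d | (j : ℕ) < i})

/-- The limit closure `(x_1,…,x_i)^lim`. -/
def firstLimitClosure {R : Type*} [CommRing R] {d : ℕ} (x : Fin d → R) (i : ℕ) : Set R :=
  {z : R | ∃ s ≥ 1,
    (∏ j ∈ Finset.univ.filter (fun j : Fin d => (j : ℕ) < i), x j) ^ (s - 1) * z ∈
      Ideal.span ((fun j => x j ^ s) '' {j : Fin d | (j : ℕ) < i})}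

/-- The grading of `R` extended to `ℤ` (zero in negative degrees). -/
def gradeZ {K R : Type*} [Field K] [CommRing R] [Algebra K R]
    (𝒜 : ℕ → Submodule K R) (n : ℤ) : Submodule K R :=
  if 0 ≤ n then 𝒜 n.toNat else ⊥

/-- The degree-`m` part of the quotient `T/L` of two ideals, induced by the grading of `R`. -/
def quotientGradedPiece {K R : Type*} [Field K] [CommRing R] [Algebra K R]
    (𝒜 : ℕ → Submodule K R) (T L : Ideal R) (m : ℤ) :
    AddSubgroup (T ⧸ Submodule.comap T.subtype L) :=
  AddSubgroup.map (Submodule.mkQ (Submodule.comap T.subtype L)).toAddMonoidHom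
    (AddSubgroup.comap T.subtype.toAddMonoidHom (gradeZ 𝒜 m).toAddSubgroup)

end

/-- The ideal `(x_1^n,…,x_d^n)`. -/
def powersIdeal {R : Type*} [CommRing R] {d : ℕ} (x : Fin d → R) (n : ℕ) : Ideal R :=
  Ideal.span (Set.range fun j => x j ^ n)

/-!
Put `X = x_1 ⋯ x_d`.  The class of `z` at stage `n` is also the class of `X^k z` at stage `n + k`,
so an element of `0^*` is represented by some `X z` at any sufficiently late stage `n`, where
`c (X z)^q` lies in the limit closure of `(x_1^{nq}, …, x_d^{nq})` for all `q = p^e ≫ 0`.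

For a USD-sequence, `(J : x_i^b) = (J : x_i)` if `J` is generated by positive powers of the other
`x_j`.  Lowering the exponents one variable at a time, `X` therefore multiplies the limit closure of
`(x_1^m, …, x_d^m)` into `(x_1^m, …, x_d^m)` for every `m ≥ 1`, and thus
`X c (X z)^q ∈ (x_1^n, …, x_d^n)^{[q]}`.

Since `X` may lie in some minimal primes, replace the multiplier `X c` by `(X + w) c`, where `w`
avoids exactly the minimal primes containing `X`.  Then `X + w` avoids all of them, while `w X` is
nilpotent, so that after passing to a power of `w` we have `w X^q = 0` for `q ≫ 0` and the
multiplier `w c` kills `(X z)^q`.  Hence `X z ∈ (x_1^n, …, x_d^n)^*`.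
-/

section TightClosure

variable {R : Type*} [CommRing R]

theorem mul_mem_offMinimalPrimes {a b : R} (ha : a ∈ offMinimalPrimes R)
    (hb : b ∈ offMinimalPrimes R) : a * b ∈ offMinimalPrimes R := fun P hP hab =>
  (IsMinimalPrime.isPrime hP).mem_or_mem hab |>.elim (ha P hP) (hb P hP)

theorem exists_forall_minimalPrimes_mem_iff_notMem (hfin : (minimalPrimes R).Finite) (y : R) :
    ∃ w : R, ∀ P ∈ minimalPrimes R, w ∈ P ↔ y ∉ P := by
  classical
  let A := hfin.toFinset.filter (y ∈ ·)
  let B := hfin.toFinset.filter (y ∉ ·)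
  have mem_A {P : Ideal R} : P ∈ A ↔ P ∈ minimalPrimes R ∧ y ∈ P := by simp [A]
  have mem_B {P : Ideal R} : P ∈ B ↔ P ∈ minimalPrimes R ∧ y ∉ P := by simp [B]
  have avoid : ¬ ((B.inf id : Ideal R) : Set R) ⊆ ⋃ P ∈ (A : Set (Ideal R)), (P : Set R) := by
    intro hsub
    obtain ⟨P, hPA, hP⟩ := (Ideal.subset_union_prime (f := id) ⊥ ⊥ fun P hP _ _ =>
      IsMinimalPrime.isPrime (mem_A.1 hP).1).1 hsub
    obtain ⟨hPmin, hyP⟩ := mem_A.1 hPA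
    obtain ⟨Q, hQB, hQP⟩ := (IsMinimalPrime.isPrime hPmin).inf_le'.1 hP
    obtain ⟨hQmin, hyQ⟩ := mem_B.1 hQB
    exact hyQ (hPmin.2 hQmin.1 hQP hyP)
  obtain ⟨w, hwB, hwA⟩ := Set.not_subset.1 avoid
  refine ⟨w, fun P hP => ⟨fun hwP hyP => hwA ?_, fun hyP => ?_⟩⟩
  · exact Set.mem_biUnion (Finset.mem_coe.2 (mem_A.2 ⟨hP, hyP⟩)) hwP
  · exact (Finset.inf_le (mem_B.2 ⟨hP, hyP⟩) : B.inf id ≤ P) hwB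

theorem exists_mul_pow_eq_zero_and_add_mem_offMinimalPrimes (hfin : (minimalPrimes R).Finite)
    (y : R) : ∃ (w : R) (k : ℕ), w * y ^ k = 0 ∧ y + w ∈ offMinimalPrimes R := by
  obtain ⟨v, hv⟩ := exists_forall_minimalPrimes_mem_iff_notMem hfin y
  have nilpotent : IsNilpotent (v * y) := by
    rw [← mem_nilradical, nilradical, ← Ideal.sInf_minimalPrimes, Ideal.mem_sInf]
    intro P hP
    by_cases hy : y ∈ P
    · exact P.mul_mem_left v hy
    · exact P.mul_mem_right y ((hv P hP).2 hy)
  obtain ⟨k, hk⟩ := nilpotent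
  refine ⟨v ^ (k + 1), k, by rw [pow_succ', mul_assoc, ← mul_pow, hk, mul_zero],
    fun P hP hyv => ?_⟩
  have hvP : v ^ (k + 1) ∈ P ↔ y ∉ P :=
    ((IsMinimalPrime.isPrime hP).pow_mem_iff_mem (k + 1) k.succ_pos).trans (hv P hP)
  by_cases hy : y ∈ P
  · exact hvP.1 ((P.add_mem_iff_right hy).1 hyv) hy
  · exact hy ((P.add_mem_iff_left (hvP.2 hy)).1 hyv)

theorem mul_mem_tightClosure_of_mul_mul_mem_frobeniusPower {p : ℕ} (hp : 1 < p)
    (hfin : (minimalPrimes R).Finite) {I : Ideal R} {c y z : R} (hc : c ∈ offMinimalPrimes R)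
    {e₀ : ℕ} (h : ∀ e ≥ e₀, y * (c * (y * z) ^ p ^ e) ∈ frobeniusPower I (p ^ e)) :
    y * z ∈ tightClosure p I := by
  obtain ⟨w, k, hwy, hyw⟩ := exists_mul_pow_eq_zero_and_add_mem_offMinimalPrimes hfin y
  refine ⟨(y + w) * c, mul_mem_offMinimalPrimes hyw hc, max e₀ k, fun e he => ?_⟩
  have hk : k ≤ p ^ e := (le_of_max_le_right he).trans (Nat.lt_pow_self hp).le
  have hw : w * y ^ p ^ e = 0 := by
    rw [← Nat.add_sub_cancel' hk, pow_add, ← mul_assoc, hwy, zero_mul]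
  have hmul : (y + w) * c * (y * z) ^ p ^ e = y * (c * (y * z) ^ p ^ e) := by
    rw [mul_pow]
    linear_combination c * z ^ p ^ e * hw
  exact hmul ▸ h e (le_of_max_le_left he)

theorem frobeniusPower_eq_map_iterateFrobenius (p : ℕ) [ExpChar R p] (I : Ideal R) (e : ℕ) :
    frobeniusPower I (p ^ e) = I.map (iterateFrobenius R p e) :=
  rfl

theorem frobeniusPower_powersIdeal (p : ℕ) [ExpChar R p] {d : ℕ} (x : Fin d → R) (n e : ℕ) :
    frobeniusPower (powersIdeal x n) (p ^ e) = powersIdeal x (n * p ^ e) := by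
  rw [frobeniusPower_eq_map_iterateFrobenius, powersIdeal, Ideal.map_span, ← Set.range_comp]
  simp only [Function.comp_def, iterateFrobenius_def, ← pow_mul, powersIdeal]

end TightClosure

section USDSequence

variable {R : Type u} [CommRing R] {d : ℕ} {x : Fin d → R}

theorem IsDSequence.mul_mem_of_mul_mul_mem (hx : IsDSequence x) {i k : Fin d} (hik : i ≤ k) {r : R}
    (h : x i * (x k * r) ∈ Ideal.span (x '' Set.Iio i)) :
    x k * r ∈ Ideal.span (x '' Set.Iio i) := by
  have hcolon : (Ideal.span (x '' Set.Iio i)).colon (Ideal.span {x i * x k}) =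
      (Ideal.span (x '' Set.Iio i)).colon (Ideal.span {x k}) := hx i i.isLt k hik
  rw [mul_comm, ← Ideal.mem_colon_span_singleton, ← hcolon, Ideal.mem_colon_span_singleton,
    mul_comm, mul_assoc]
  exact h

theorem IsUSDSequence.mul_mem_of_mul_mul_mem (hx : IsUSDSequence x) {m : Fin d → ℕ}
    (hm : ∀ j, 1 ≤ m j) (i : Fin d) {r : R}
    (h : x i * (x i * r) ∈ Ideal.span ((fun j => x j ^ m j) '' {i}ᶜ)) :
    x i * r ∈ Ideal.span ((fun j => x j ^ m j) '' {i}ᶜ) := by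
  classical
  obtain _ | n := d
  · exact i.elim0
  let σ := Equiv.swap i (Fin.last n)
  let m' := Function.update m i 1
  have hm' : ∀ j, 1 ≤ m' j := fun j => by
    by_cases hj : j = i <;> simp [m', hj, hm]
  have hlast : x (σ (Fin.last n)) ^ m' (σ (Fin.last n)) = x i := by simp [σ, m']
  have himage : (fun j => x (σ j) ^ m' (σ j)) '' Set.Iio (Fin.last n) =
      (fun j => x j ^ m j) '' {i}ᶜ := by
    have hσ : σ '' Set.Iio (Fin.last n) = {i}ᶜ := by
      rw [show Set.Iio (Fin.last n) = {Fin.last n}ᶜ by ext; simp [Fin.lt_last_iff_ne_last],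
        Set.image_compl_eq σ.bijective, Set.image_singleton, Equiv.swap_apply_right]
    rw [← Set.image_image (fun j => x j ^ m' j) σ, hσ]
    exact Set.image_congr fun j hj => by simp [m', Function.update_of_ne hj]
  have hdseq := (hx m' hm' σ).mul_mem_of_mul_mul_mem (le_refl (Fin.last n)) (r := r)
  rw [himage, hlast] at hdseq
  exact hdseq h

theorem IsUSDSequence.mul_mem_of_pow_mul_mem (hx : IsUSDSequence x) {m : Fin d → ℕ}
    (hm : ∀ j, 1 ≤ m j) (i : Fin d) (b : ℕ) {r : R}
    (h : x i ^ b * r ∈ Ideal.span ((fun j => x j ^ m j) '' {i}ᶜ)) :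
    x i * r ∈ Ideal.span ((fun j => x j ^ m j) '' {i}ᶜ) := by
  induction b generalizing r with
  | zero => exact Ideal.mul_mem_left _ _ (by simpa using h)
  | succ b ih =>
    refine hx.mul_mem_of_mul_mul_mem hm i (ih ?_)
    rwa [← mul_assoc, ← pow_succ]

theorem IsUSDSequence.mul_mem_span_of_pow_mul_mem_span_add_single (hx : IsUSDSequence x)
    {m : Fin d → ℕ} (hm : ∀ j, 1 ≤ m j) (i : Fin d) (b : ℕ) {r : R}
    (h : x i ^ b * r ∈ Ideal.span (Set.range fun j => x j ^ (m + Pi.single i b : Fin d → ℕ) j)) :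
    x i * r ∈ Ideal.span (Set.range fun j => x j ^ m j) := by
  have himage : (fun j => x j ^ (m + Pi.single i b : Fin d → ℕ) j) '' {i}ᶜ =
      (fun j => x j ^ m j) '' {i}ᶜ :=
    Set.image_congr fun j hj => by simp [Pi.single_eq_of_ne hj]
  rw [← Set.insert_image_compl_eq_range _ i, himage, Ideal.mem_span_insert] at h
  rw [← Set.insert_image_compl_eq_range _ i, Ideal.mem_span_insert]
  obtain ⟨a, v, hv, hav⟩ := h
  have hdiff : x i ^ b * (r - a * x i ^ m i) = v := by
    rw [Pi.add_apply, Pi.single_eq_same, pow_add] at hav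
    linear_combination hav
  exact ⟨x i * a, x i * (r - a * x i ^ m i),
    hx.mul_mem_of_pow_mul_mem hm i b (hdiff ▸ hv), by ring⟩

theorem IsUSDSequence.prod_mul_mem_span_of_prod_pow_mul_mem_span (hx : IsUSDSequence x)
    {m : Fin d → ℕ} (hm : ∀ j, 1 ≤ m j) (b : Fin d → ℕ) (s : Finset (Fin d)) {r : R}
    (h : (∏ i ∈ s, x i ^ b i) * r ∈
      Ideal.span (Set.range fun j => x j ^ (m + ∑ i ∈ s, Pi.single i (b i)) j)) :
    (∏ i ∈ s, x i) * r ∈ Ideal.span (Set.range fun j => x j ^ m j) := by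
  induction s using Finset.induction_on generalizing r with
  | empty => simpa using h
  | insert i s his ih =>
    rw [Finset.prod_insert his, Finset.sum_insert his, add_comm (Pi.single i _), ← add_assoc,
      mul_assoc] at h
    have hi := hx.mul_mem_span_of_pow_mul_mem_span_add_single
      (fun j => (hm j).trans (Nat.le_add_right _ _)) i (b i) h
    rw [Finset.prod_insert his, mul_comm (x i), mul_assoc]
    exact ih (by rwa [mul_left_comm])

theorem IsUSDSequence.prod_mul_mem_powersIdeal (hx : IsUSDSequence x) {n b : ℕ} (hn : 1 ≤ n) {r : R}
    (h : (∏ j, x j) ^ b * r ∈ powersIdeal x (n + b)) :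
    (∏ j, x j) * r ∈ powersIdeal x n := by
  refine hx.prod_mul_mem_span_of_prod_pow_mul_mem_span (m := fun _ => n) (fun _ => hn)
    (fun _ => b) Finset.univ ?_
  rw [Finset.univ_sum_single, Finset.prod_pow]
  exact h

theorem IsUSDSequence.prod_mul_mem_tightClosure (hx : IsUSDSequence x)
    (hfin : (minimalPrimes R).Finite) (p : ℕ) [Fact p.Prime] [CharP R p] {n : ℕ} (hn : 1 ≤ n)
    {c z : R} (hc : c ∈ offMinimalPrimes R) {e₀ : ℕ}
    (h : ∀ e ≥ e₀, ∃ m ≥ n * p ^ e,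
      (∏ j, x j) ^ (m - n * p ^ e) * (c * ((∏ j, x j) * z) ^ p ^ e) ∈ powersIdeal x m) :
    (∏ j, x j) * z ∈ tightClosure p (powersIdeal x n) := by
  have hp : p.Prime := Fact.out
  have : ExpChar R p := .prime hp
  refine mul_mem_tightClosure_of_mul_mul_mem_frobeniusPower hp.one_lt hfin hc (e₀ := e₀)
    fun e he => ?_
  obtain ⟨m, hm, hmem⟩ := h e he
  obtain ⟨b, rfl⟩ := Nat.exists_eq_add_of_le hm
  rw [Nat.add_sub_cancel_left] at hmem
  rw [frobeniusPower_powersIdeal]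
  exact hx.prod_mul_mem_powersIdeal (Nat.mul_pos hn (pow_pos hp.pos e)) hmem

end USDSequence

theorem stmt15_general {R : Type u} [CommRing R] (hfin : (minimalPrimes R).Finite)
    (p : ℕ) [Fact p.Prime] [CharP R p] {M : Type*} [AddCommGroup M] [Module R M]
    {d : ℕ} (x : Fin d → R) (husd : IsUSDSequence x)
    (ι : ∀ n : ℕ, (R ⧸ powersIdeal x n) →ₗ[R] M)
    (hcomp : ∀ n m : ℕ, n ≤ m → ∀ z : R,
      ι n (Ideal.Quotient.mk (powersIdeal x n) z) =
        ι m (Ideal.Quotient.mk (powersIdeal x m) ((∏ j, x j) ^ (m - n) * z)))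
    (hker : ∀ (n : ℕ) (z : R), ι n (Ideal.Quotient.mk (powersIdeal x n) z) = 0 ↔
      ∃ m ≥ n, (∏ j, x j) ^ (m - n) * z ∈ powersIdeal x m)
    {N : ℕ} (hN : 1 ≤ N) :
    {h : M | ∃ (n : ℕ) (z : R), h = ι n (Ideal.Quotient.mk (powersIdeal x n) z) ∧
        ∃ c ∈ offMinimalPrimes R, ∃ e₀ : ℕ, ∀ e ≥ e₀,
          ι (n * p ^ e) (Ideal.Quotient.mk (powersIdeal x (n * p ^ e)) (c * z ^ p ^ e)) = 0} =
      {h : M | ∃ n ≥ 1, ∃ z ∈ tightClosure p (powersIdeal x (N * n)),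
        h = ι (N * n) (Ideal.Quotient.mk (powersIdeal x (N * n)) z)} := by
  have : ExpChar R p := .prime Fact.out
  ext h
  constructor
  · rintro ⟨n, z, rfl, c, hc, e₀, hz⟩
    obtain ⟨k, hk⟩ := Nat.exists_eq_add_of_le (Nat.le_mul_of_pos_left (n + 1) hN)
    have hsub : n + 1 + k - n = k + 1 := by lia
    refine ⟨n + 1, n.succ_pos, ?_⟩
    rw [hk]
    refine ⟨(∏ j, x j) * ((∏ j, x j) ^ k * z),
      husd.prod_mul_mem_tightClosure hfin p (by lia) hc (e₀ := e₀) fun e he => (hker _ _).1 ?_, ?_⟩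
    · rw [← hz e he, hcomp (n * p ^ e) ((n + 1 + k) * p ^ e) (Nat.mul_le_mul_right _ (by lia)),
        ← Nat.sub_mul, hsub, pow_mul, ← mul_assoc (∏ j, x j), ← pow_succ', mul_pow, mul_left_comm]
    · rw [hcomp n (n + 1 + k) (by lia), hsub, pow_succ', mul_assoc]
  · rintro ⟨n, -, z, ⟨c, hc, e₀, hz⟩, rfl⟩
    refine ⟨N * n, z, rfl, c, hc, e₀, fun e he => (hker _ _).2 ⟨N * n * p ^ e, le_rfl, ?_⟩⟩
    simpa only [Nat.sub_self, pow_zero, one_mul, frobeniusPower_powersIdeal] using hz e he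

/-- let `(R,𝔪)` be an ℕ-graded isolated non-`F`-rational singularity with a
homogeneous sop `x_1,…,x_d` forming a USD-sequence.  Present `H_𝔪^d(R)` as the direct limit
of the `R/(x_1^n,…,x_d^n)` along multiplication by `x_1⋯x_d`, with structure maps `ι`.
Then, after replacing `x` by a power (i.e. for some `N ≥ 1`), the tight closure of zero in
`H_𝔪^d(R)` equals `⋃_{n>0} Z_n(nδ)` where `Z_n = (x_1^n,…,x_d^n)^*/(x_1^n,…,x_d^n)^lim`
(realized inside `H_𝔪^d(R)` as the image under `ι` of the classes of `(x_1^n,…,x_d^n)^*`;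
note `ι` kills `(x_1^n,…,x_d^n)^lim`). -/
theorem stmt15 {K : Type} [Field K] {R : Type} [CommRing R] [Algebra K R]
    [Algebra.FiniteType K R] [IsReduced R]
    (p : ℕ) [Fact p.Prime] [CharP R p]
    (𝒜 : ℕ → Submodule K R) [GradedAlgebra 𝒜]
    (𝔪 : Ideal R) (h𝔪 : 𝔪 = (HomogeneousIdeal.irrelevant 𝒜).toIdeal)
    (d : ℕ) (hdim : ringKrullDim R = d)
    (hequi : ∀ P ∈ minimalPrimes R, ringKrullDim (R ⧸ P) = ringKrullDim R)
    (hiso : IsIsolatedNonFRational p 𝔪)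
    (x : Fin d → R) (degs : Fin d → ℕ) (hhom : ∀ j, x j ∈ 𝒜 (degs j))
    (hsop : (Ideal.span (Set.range x)).radical = 𝔪)
    (husd : IsUSDSequence x)
    -- the Čech/direct-limit presentation of the top local cohomology:
    (ι : ∀ n : ℕ, (R ⧸ powersIdeal x n) →ₗ[R]
      ((localCohomology 𝔪 d).obj (ModuleCat.of R R)))
    (hcomp : ∀ n m : ℕ, n ≤ m → ∀ z : R,
      ι n (Ideal.Quotient.mk (powersIdeal x n) z) =
        ι m (Ideal.Quotient.mk (powersIdeal x m) ((∏ j, x j) ^ (m - n) * z)))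
    (hexh : ∀ h : ((localCohomology 𝔪 d).obj (ModuleCat.of R R)),
      ∃ (n : ℕ) (z : R), n ≥ 1 ∧ h = ι n (Ideal.Quotient.mk (powersIdeal x n) z))
    (hker : ∀ (n : ℕ) (z : R), ι n (Ideal.Quotient.mk (powersIdeal x n) z) = 0 ↔
      ∃ m ≥ n, (∏ j, x j) ^ (m - n) * z ∈ powersIdeal x m) :
    ∃ N ≥ 1,
      {h : ((localCohomology 𝔪 d).obj (ModuleCat.of R R)) |
          ∃ (n : ℕ) (z : R), h = ι n (Ideal.Quotient.mk (powersIdeal x n) z) ∧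
            ∃ c ∈ offMinimalPrimes R, ∃ e₀ : ℕ, ∀ e ≥ e₀,
              ι (n * p ^ e) (Ideal.Quotient.mk (powersIdeal x (n * p ^ e))
                (c * z ^ p ^ e)) = 0} =
        {h : ((localCohomology 𝔪 d).obj (ModuleCat.of R R)) |
          ∃ n ≥ 1, ∃ z ∈ tightClosure p (powersIdeal x (N * n)),
            h = ι (N * n) (Ideal.Quotient.mk (powersIdeal x (N * n)) z)} := by
  have hfin : (minimalPrimes R).Finite :=
    have := Algebra.FiniteType.isNoetherianRing K R
    minimalPrimes.finite_of_isNoetherianRing R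
  exact ⟨1, le_rfl, stmt15_general hfin p x husd ι hcomp hker le_rfl⟩
end
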